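/- arXiv:2605.19063 — 2 statements merged into one kernel-verified Lean document; each statement's English description precedes it below -/
import Mathlib

section
/- For all n ≥ 3 and all natural numbers u, v, the number of π ∈ NC(n,3) with skew(π) = u and area(π) = v equals the number of parallelogram polyominoes P ∈ PP(n−2,3) with area(P) = u and bounce(P) = v. (The pair (skew, area) is a combinatorial interpretation of the q,t-Narayana polynomial N_{n,3}(q,t).) -/
namespace QtN

/-! ### Lattice paths and parallelogram polyominoes -/

/-- A step of a lattice path: east or north. -/
inductive Step : Type
  | E : Step
  | N : Step
  deriving DecidableEq, Repr

/-- Number of east steps of a path. -/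
def countE (w : List Step) : ℕ := w.count Step.E

/-- Number of north steps of a path. -/
def countN (w : List Step) : ℕ := w.count Step.N

/-- Endpoint of a path started at the origin. -/
def pathPos (w : List Step) : ℕ × ℕ := (countE w, countN w)

/-- The set of lattice points visited by a path started at the origin. -/
def pathPts (w : List Step) : Finset (ℕ × ℕ) :=
  ((List.range (w.length + 1)).map (fun i => pathPos (w.take i))).toFinset

/-- `colHeightsAux w h`: for each east step of `w` (in order), the number of north
steps preceding it, starting with `h` north steps already performed. -/
def colHeightsAux : List Step → ℕ → List ℕ
  | [], _ => []
  | Step.E :: r, h => h :: colHeightsAux r h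
  | Step.N :: r, h => colHeightsAux r (h + 1)

/-- Height at which the path `w` crosses the vertical strip `i ≤ x ≤ i + 1`. -/
def colHeight (w : List Step) (i : ℕ) : ℕ := (colHeightsAux w 0).getD i 0

/-- A parallelogram polyomino of size `m × n`: a pair of monotone lattice paths from
`(0,0)` to `(m,n)` (east/north steps), the upper path staying weakly above the lower
path, and the two paths meeting only at `(0,0)` and `(m,n)`. -/
structure Polyomino (m n : ℕ) : Type where
  lower : List Step
  upper : List Step
  lowerE : countE lower = m
  lowerN : countN lower = n
  upperE : countE upper = m
  upperN : countN upper = n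
  above : ∀ i < m, colHeight lower i ≤ colHeight upper i
  meet : pathPts upper ∩ pathPts lower = {(0, 0), (m, n)}

/-- The area statistic: number of unit squares between the two paths,
minus `(m + n - 1)`. -/
def area {m n : ℕ} (P : Polyomino m n) : ℕ :=
  (∑ i ∈ Finset.range m, (colHeight P.upper i - colHeight P.lower i)) - (m + n - 1)

/-- Where an eastward run at height `y`, starting at `x`, first hits the lower path. -/
def eastTarget (hL : ℕ → ℕ) (m x y : ℕ) : ℕ :=
  ((List.range m).filter (fun i => decide (x ≤ i ∧ y ≤ hL i))).headD m

/-- Total bounce contribution: from state `(x, y)` just after the `j`-th east-to-north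
turn (counting the turns made so far), alternately go north until hitting the upper
path and east until hitting the lower path, each step contributing the number of
east-to-north turns preceding it. -/
def bounceAux (hU hL : ℕ → ℕ) (m n : ℕ) : ℕ → ℕ → ℕ → ℕ → ℕ
  | 0, _, _, _ => 0
  | fuel + 1, x, y, j =>
    if x = m ∧ y = n then 0
    else
      let y' := hU (x - 1)
      let x' := if y' = n then m else eastTarget hL m x y'
      (j + 1) * ((y' - y) + (x' - x)) + bounceAux hU hL m n fuel x' y' (j + 1)

/-- The bounce statistic of a parallelogram polyomino: the bounce path starts with a
single east step (contributing `0`) and then alternates north runs (to the ceiling)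
and east runs (to the floor); each step contributes the number of east-to-north turns
preceding it; finally `(m + n - 1)` is subtracted. -/
def bounce {m n : ℕ} (P : Polyomino m n) : ℕ :=
  bounceAux (colHeight P.upper) (colHeight P.lower) m n (m + n + 2) 1 0 0 - (m + n - 1)

/-! ### Set partitions and noncrossing partitions -/

/-- Maximum of a finite set of naturals (`0` for the empty set). -/
def fmax (β : Finset ℕ) : ℕ := β.sup id

/-- Minimum of a finite set of naturals (`0` for the empty set). -/
def fmin (β : Finset ℕ) : ℕ := if h : β.Nonempty then β.min' h else 0

/-- A set partition of `{1, …, n}`, given by its finite set of blocks. -/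
structure SetPartition (n : ℕ) : Type where
  blocks : Finset (Finset ℕ)
  not_empty_mem : ∅ ∉ blocks
  cover : ∀ i : ℕ, i ∈ Finset.Icc 1 n ↔ ∃ β ∈ blocks, i ∈ β
  disjoint : ∀ β ∈ blocks, ∀ γ ∈ blocks, β ≠ γ → Disjoint β γ

/-- A family of blocks is noncrossing if there are no `a < b < c < d` with
`a, c` in one block and `b, d` in a different block. -/
def IsNoncrossing (bs : Finset (Finset ℕ)) : Prop :=
  ∀ a b c d : ℕ, a < b → b < c → c < d →
    ∀ β ∈ bs, ∀ γ ∈ bs, a ∈ β → c ∈ β → b ∈ γ → d ∈ γ → β = γ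

/-- `NC n k`: noncrossing partitions of `{1, …, n}` with exactly `n - k + 1` blocks. -/
abbrev NC (n k : ℕ) : Type :=
  {P : SetPartition n // IsNoncrossing P.blocks ∧ P.blocks.card = n - k + 1}

/-- The skip statistic: `∑_{β} (max β - min β - |β| + 1)`. -/
def skip (bs : Finset (Finset ℕ)) : ℕ :=
  ∑ β ∈ bs, ((fmax β + 1 - fmin β) - β.card)

/-- The non-singleton blocks of a partition. -/
def nsBlocks (bs : Finset (Finset ℕ)) : Finset (Finset ℕ) :=
  bs.filter (fun β => 2 ≤ β.card)

/-- The block of `bs` containing `x` (junk if there is not exactly one). -/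
def blockContaining (bs : Finset (Finset ℕ)) (x : ℕ) : Finset ℕ :=
  (bs.filter (fun β => x ∈ β)).sup id

/-- For a noncrossing partition in `NC n 3`, the quadruple `(a, b, c, d)` describing its
non-singleton blocks: for two pair blocks `{a,b}` and `{c,d}` (with `a` the global
minimum) this is `(a, b, c, d)`; for a single triple block `{a, b, c}` (`a < b < c`)
this is `(a, b, b, c)`. -/
def blockQuad (bs : Finset (Finset ℕ)) : ℕ × ℕ × ℕ × ℕ :=
  let A := blockContaining (nsBlocks bs) (fmin ((nsBlocks bs).sup id))
  if (nsBlocks bs).card = 1 then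
    let l := A.sort (· ≤ ·)
    (l.getD 0 0, l.getD 1 0, l.getD 1 0, l.getD 2 0)
  else
    let B := ((nsBlocks bs).erase A).sup id
    (fmin A, fmax A, fmin B, fmax B)

/-- The leap statistic on `NC n 3`: `leap(ab|cd) = c - 2 + max(0, c - b)`,
and `leap({a,b,c}) = b - 2` (the case `b = c`). -/
def leap (bs : Finset (Finset ℕ)) : ℕ :=
  let (_, b, c, _) := blockQuad bs
  (c - 2) + (c - b)

/-- The skew statistic on `NC n 3`: `skew(ab|cd) = c - 2 + a` if `b < c`, else `c - 2`;
`skew({a,b,c}) = b - 2` (the case `b = c`). -/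
def skew (bs : Finset (Finset ℕ)) : ℕ :=
  let (a, b, c, _) := blockQuad bs
  if b < c then c - 2 + a else c - 2

/-- The mag statistic on `NC n 3`: `mag(ab|cd) = a + max(b, c) - 2 - ⌈(b - a)/2⌉`,
and `mag({a,b,c}) = a + b - 2 - ⌈(b - a)/2⌉` (the case `b = c`). -/
def mag (bs : Finset (Finset ℕ)) : ℕ :=
  let (a, b, c, _) := blockQuad bs
  a + max b c - 2 - (b - a + 1) / 2

/-- The area statistic on noncrossing partitions:
`area(π) = ∑_{β, β' ∈ π} #{ i ∈ β' : i < max β < max β' }` (ordered pairs of blocks). -/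
def ncArea (bs : Finset (Finset ℕ)) : ℕ :=
  ∑ β ∈ bs, ∑ γ ∈ bs, (γ.filter (fun i => i < fmax β ∧ fmax β < fmax γ)).card

/-- The elements of the non-singleton blocks, listed in increasing order, with
the middle element of a size-3 block listed twice. -/
def nsList (bs : Finset (Finset ℕ)) : List ℕ :=
  let l := ((nsBlocks bs).sup id).sort (· ≤ ·)
  if l.length = 3 then [l.getD 0 0, l.getD 1 0, l.getD 1 0, l.getD 2 0] else l

/-- The multiset of block sizes of a partition. -/
def blockSizes (bs : Finset (Finset ℕ)) : Multiset ℕ := bs.val.map Finset.card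

/-- The image of a partition of `{1, …, n}` under the flip `i ↦ n + 1 - i`. -/
def flipBlocks (n : ℕ) (bs : Finset (Finset ℕ)) : Finset (Finset ℕ) :=
  bs.image (fun β => β.image (fun i => n + 1 - i))

/-! ### The mingarc statistic -/

/-- The gaps `ν_r = m_{r+1} - m_r - 1` between consecutive block minima
`m_1 < ⋯ < m_h` (with `m_{h+1} = n + 1`). -/
def nuList (n : ℕ) (bs : Finset (Finset ℕ)) : List ℕ :=
  let ms := ((bs.image fmin).sort (· ≤ ·)) ++ [n + 1]
  (List.range (bs.image fmin).card).map (fun r => ms.getD (r + 1) 0 - ms.getD r 0 - 1)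

/-- Concatenation of `replicate ν c` over a list of pairs `(c, ν)`. -/
def repeatEach : List (ℕ × ℕ) → List ℕ
  | [] => []
  | p :: r => List.replicate p.2 p.1 ++ repeatEach r

/-- The right endpoints `y_1 ≤ ⋯ ≤ y_{k-1}`: each block maximum `c_r` repeated
`ν_r` times, in increasing order. -/
def ysList (n : ℕ) (bs : Finset (Finset ℕ)) : List ℕ :=
  repeatEach (List.zip ((bs.image fmax).sort (· ≤ ·)) (nuList n bs))

/-- The left endpoints `x_1 < ⋯ < x_{k-1}`: the elements of `{1, …, n}` that are not
block maxima, in increasing order. -/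
def xsList (n : ℕ) (bs : Finset (Finset ℕ)) : List ℕ :=
  ((Finset.Icc 1 n).filter (fun i => i ∉ bs.image fmax)).sort (· ≤ ·)

/-- Greedy left-to-right selection of arcs: keep the first arc, and thereafter keep the
earliest arc whose left endpoint exceeds the right endpoint of the last kept arc. -/
def greedyArcs : List (ℕ × ℕ) → Option ℕ → List (ℕ × ℕ)
  | [], _ => []
  | a :: rest, none => a :: greedyArcs rest (some a.2)
  | a :: rest, some r =>
      if r < a.1 then a :: greedyArcs rest (some a.2) else greedyArcs rest (some r)

/-- The mingarc statistic: the sum of `n - y_i` over the greedily selected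
candidate arcs `[x_i, y_i]`. -/
def mingarc (n : ℕ) (bs : Finset (Finset ℕ)) : ℕ :=
  ((greedyArcs (List.zip (xsList n bs) (ysList n bs)) none).map (fun p => n - p.2)).sum

/-! ### The map η from polyominoes to noncrossing partitions -/

/-- Largest column index `i < m` with `colHeight lower i ≤ j`: the rightmost cell
adjacent to the floor in row `j`. -/
def eFloor {m k : ℕ} (P : Polyomino m k) (j : ℕ) : ℕ :=
  (((List.range m).filter (fun i => decide (colHeight P.lower i ≤ j))).getLastD 0)

/-- Smallest column index `i` with `colHeight upper i ≥ j + 1`: the leftmost cell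
adjacent to the ceiling in row `j` (with default `m - 1`). -/
def fCeil {m k : ℕ} (P : Polyomino m k) (j : ℕ) : ℕ :=
  (((List.range m).filter (fun i => decide (j + 1 ≤ colHeight P.upper i))).headD (m - 1))

/-- The number of cells adjacent to the ceiling in row `j`. -/
def rowCount {m k : ℕ} (P : Polyomino m k) (j : ℕ) : ℕ :=
  fCeil P (j + 1) - fCeil P j + 1

/-- Pick, `cnt` times, the largest label in `{1, …, L}` not used yet. -/
def pickRow : ℕ → ℕ → Finset ℕ → Finset ℕ
  | 0, _, _ => ∅
  | cnt + 1, L, used =>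
      let x := fmax ((Finset.Icc 1 L) \ used)
      insert x (pickRow cnt L (insert x used))

/-- The blocks of `η(P)`: label the cells adjacent to the floor `1, …, n` going bottom
to top, left to right (the label of the floor cell in column `i`, row `j` is
`i + j + 1`, and the labels present in rows `≤ j` are exactly `1, …, eFloor P j + j + 1`);
then going bottom to top, left to right over the cells adjacent to the ceiling, assign
to each the largest unused indexing label occurring in the same row or below; the
blocks are the label sets of the ceiling rows. -/
def etaBlocks {m k : ℕ} (P : Polyomino m k) : Finset (Finset ℕ) :=
  (((List.range k).foldl
      (fun st j =>
        let B := pickRow (rowCount P j) (eFloor P j + j + 1) st.1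
        (st.1 ∪ B, B :: st.2))
      ((∅ : Finset ℕ), ([] : List (Finset ℕ)))).2).toFinset

/-!
Both families are enumerated by the monomials `q ^ (f + h + 2 * j) * t ^ (g + h + 2 * i)` with
`f + g + h + i + j < n - 2` and `i * j = 0`.

A partition in `NC n 3` has either two pair blocks or one triple block. In `area`, singletons
contribute nothing, and each element `i` of a larger block `β` contributes the number of block
maxima strictly between `i` and `max β`; every integer there is one, except for the nonmaximal
elements of the larger blocks. Hence `skew` and `area` are linear in the gaps between
the elements of these blocks. For disjoint pairs the parameter `j` is the least element; for
nested pairs `j = 0`, and triple blocks are their degenerate case.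

A polyomino of size `(n - 2) × 3` is determined by the abscissas of the two free north steps of
each of its paths. After its initial step the bounce path makes at most three eastward runs, and
once the heights of these runs are known both statistics are again linear in the abscissas.
-/

/-! ### The monomials and the two families of quadruples -/

/-- The monomials of the `q,t`-Narayana polynomial `N_{m+2,3}`, in the form
`q ^ (f + h + 2 * j) * t ^ (g + h + 2 * i)`. They are the common model of the noncrossing
partitions and of the polyominoes; exchanging `(f, i)` with `(g, j)` exhibits the
`q,t`-symmetry. -/
@[ext]
structure NarayanaTerm (m : ℕ) where
  (f g h i j : ℕ)
  sum_lt : f + g + h + i + j < m := by omega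
  eq_zero_or : i = 0 ∨ j = 0 := by omega

/-- The exponent of `q` in a monomial of `N_{m+2,3}`. -/
def NarayanaTerm.qExp {m : ℕ} (x : NarayanaTerm m) : ℕ := x.f + x.h + 2 * x.j

/-- The exponent of `t` in a monomial of `N_{m+2,3}`. -/
def NarayanaTerm.tExp {m : ℕ} (x : NarayanaTerm m) : ℕ := x.g + x.h + 2 * x.i

/-- A polyomino of size `m × 3`, given by the abscissas `u₂`, `u₃` of the last two north steps of
its upper path and the abscissas `l₁`, `l₂` of the first two north steps of its lower path. The
remaining two north steps are forced to be at the abscissas `0` and `m`. -/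
@[ext]
structure PolyominoShape (m : ℕ) where
  (u₂ u₃ l₁ l₂ : ℕ)
  u₂_le_u₃ : u₂ ≤ u₃ := by omega
  l₁_le_l₂ : l₁ ≤ l₂ := by omega
  u₂_lt_l₁ : u₂ < l₁ := by omega
  u₃_lt_l₂ : u₃ < l₂ := by omega
  l₂_le : l₂ ≤ m := by omega

/-- A partition in `NC n 3`, encoded as its `blockQuad`: two pair blocks `{a, b}` and `{c, d}` if
`b ≠ c`, and the triple block `{a, b, d}` if `b = c`. -/
@[ext]
structure NoncrossingQuad (n : ℕ) where
  (a b c d : ℕ)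
  one_le_a : 1 ≤ a := by omega
  a_lt_b : a < b := by omega
  a_lt_c : a < c := by omega
  c_lt_d : c < d := by omega
  b_le : b ≤ n := by omega
  d_le : d ≤ n := by omega
  noncrossing : b ≤ c ∨ d < b := by omega

namespace PolyominoShape

variable {m : ℕ}

/-- The monomial `q ^ area * t ^ bounce` of a polyomino, as an element of `NarayanaTerm m`. The
cases are distinguished by the course of the bounce path. -/
def toTerm : PolyominoShape m → NarayanaTerm m
  | ⟨u₂, u₃, l₁, l₂, _, _, _, _, _⟩ =>
    if _ : u₂ = 0 then
      if _ : u₃ = 0 then { f := l₂ - l₁, g := 0, h := 0, i := 0, j := l₁ - 1 }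
      else if _ : l₁ + u₃ ≤ l₂ then
        { f := l₂ - u₃ - l₁, g := m - l₂ + 1, h := 0, i := 0, j := l₁ - 1 }
      else { f := l₁ + u₃ - l₂ - 1, g := m - l₂, h := 1, i := 0, j := l₂ - u₃ - 1 }
    else if _ : l₁ ≤ u₃ then
      { f := l₁ - u₂ - 1, g := u₃ - l₁, h := l₂ - u₃ - 1, i := m - l₂ + 2, j := 0 }
    else if _ : l₁ = u₃ + 1 then { f := u₃ - u₂, g := m - l₂, h := l₂ - l₁, i := 1, j := 0 }
    else { f := u₃ - u₂, g := m - l₂, h := l₂ - l₁ + 2, i := 0, j := l₁ - u₃ - 2 }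

/-- The inverse of `PolyominoShape.toTerm`. -/
def ofTerm : NarayanaTerm m → PolyominoShape m
  | ⟨f, g, h, i, j, _, _⟩ =>
    if _ : 2 ≤ i then
      { u₂ := m - i - h - g - f, u₃ := m + 1 - i - h, l₁ := m + 1 - i - h - g, l₂ := m + 2 - i }
    else if _ : i = 1 then
      { u₂ := m - g - h - 1 - f, u₃ := m - g - h - 1, l₁ := m - g - h, l₂ := m - g }
    else if _ : 2 ≤ h then
      { u₂ := m - g - h - j - f, u₃ := m - g - h - j, l₁ := m - g - h + 2, l₂ := m - g }
    else if _ : h = 1 then { u₂ := 0, u₃ := m - g - j - 1, l₁ := j + f + 2, l₂ := m - g }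
    else if _ : g = 0 then { u₂ := 0, u₃ := 0, l₁ := j + 1, l₂ := j + 1 + f }
    else { u₂ := 0, u₃ := m - g - f - j, l₁ := j + 1, l₂ := m + 1 - g }

/-- Polyominoes of size `m × 3` correspond bijectively to the monomials of `N_{m+2,3}`. -/
def equivTerm : PolyominoShape m ≃ NarayanaTerm m where
  toFun := toTerm
  invFun := ofTerm
  left_inv := by
    rintro ⟨u₂, u₃, l₁, l₂, _, _, _, _, _⟩
    simp only [toTerm]
    split_ifs <;> simp only [ofTerm] <;> split_ifs <;>
      first | contradiction | (ext <;> dsimp only <;> omega)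
  right_inv := by
    rintro ⟨f, g, h, i, j, _, _⟩
    simp only [ofTerm]
    split_ifs <;> simp only [toTerm] <;> split_ifs <;>
      first | contradiction | (ext <;> dsimp only <;> omega)

theorem qExp_toTerm (x : PolyominoShape m) :
    x.toTerm.qExp = x.l₁ + x.l₂ - x.u₂ - x.u₃ - 2 := by
  obtain ⟨u₂, u₃, l₁, l₂, _, _, _, _, _⟩ := x
  simp only [toTerm]
  split_ifs <;> simp only [NarayanaTerm.qExp] <;> omega

theorem tExp_toTerm (x : PolyominoShape m) :
    x.toTerm.tExp =
      if x.u₂ = 0 then if x.u₃ = 0 then 0 else m + 1 - x.l₂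
      else if x.u₃ < x.l₁ then m + 2 - x.l₁ else 2 * m + 3 - x.l₁ - x.l₂ := by
  obtain ⟨u₂, u₃, l₁, l₂, _, _, _, _, _⟩ := x
  simp only [toTerm]
  split_ifs <;> simp only [NarayanaTerm.tExp] <;> omega

end PolyominoShape

namespace NoncrossingQuad

variable {m : ℕ}

/-- The monomial `q ^ skew * t ^ area` of a noncrossing partition, as an element of
`NarayanaTerm m`. The two cases are disjoint pairs, and nested pairs or a triple block. -/
def toTerm : NoncrossingQuad (m + 2) → NarayanaTerm m
  | ⟨a, b, c, d, _, _, _, _, _, _, _⟩ =>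
    if _ : b < c then { f := c - b - 1, g := d - c - 1, h := b - a - 1, i := 0, j := a }
    else { f := a - 1, g := b - d, h := c - a - 1, i := d - c - 1, j := 0 }

/-- The inverse of `NoncrossingQuad.toTerm`. -/
def ofTerm : NarayanaTerm m → NoncrossingQuad (m + 2)
  | ⟨f, g, h, i, j, _, _⟩ =>
    if _ : j ≠ 0 then
      { a := j, b := j + h + 1, c := j + h + f + 2, d := j + h + f + g + 3 }
    else if _ : g = 0 then { a := f + 1, b := f + h + 2, c := f + h + 2, d := f + h + i + 3 }
    else { a := f + 1, b := f + h + i + g + 3, c := f + h + 2, d := f + h + i + 3 }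

/-- Partitions in `NC (m + 2) 3` correspond bijectively to the monomials of `N_{m+2,3}`. -/
def equivTerm : NoncrossingQuad (m + 2) ≃ NarayanaTerm m where
  toFun := toTerm
  invFun := ofTerm
  left_inv := by
    rintro ⟨a, b, c, d, _, _, _, _, _, _, _⟩
    simp only [toTerm]
    split_ifs <;> simp only [ofTerm] <;> split_ifs <;>
      first | contradiction | (ext <;> dsimp only <;> omega)
  right_inv := by
    rintro ⟨f, g, h, i, j, _, _⟩
    simp only [ofTerm]
    split_ifs <;> simp only [toTerm] <;> split_ifs <;>
      first | contradiction | (ext <;> dsimp only <;> omega)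

theorem qExp_toTerm (x : NoncrossingQuad (m + 2)) :
    x.toTerm.qExp = if x.b < x.c then x.c - 2 + x.a else x.c - 2 := by
  obtain ⟨a, b, c, d, _, _, _, _, _, _, _⟩ := x
  simp only [toTerm]
  split_ifs <;> simp only [NarayanaTerm.qExp] <;> omega

theorem tExp_toTerm (x : NoncrossingQuad (m + 2)) :
    x.toTerm.tExp =
      if x.b = x.c then 2 * x.d - x.a - x.b - 3
      else if x.b < x.c then x.b - x.a + x.d - x.c - 2 else x.b - x.a + x.d - x.c - 3 := by
  obtain ⟨a, b, c, d, _, _, _, _, _, _, _⟩ := x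
  simp only [toTerm]
  split_ifs <;> simp only [NarayanaTerm.tExp] <;> omega

end NoncrossingQuad

/-! ### Lattice paths -/

/-- The lattice path from `(x, 0)` to `(m, l.length)` whose successive north steps are at the
abscissas listed in `l`. This requires `x ≤ l₀ ≤ l₁ ≤ ⋯ ≤ m`. -/
def northPath (m : ℕ) : ℕ → List ℕ → List Step
  | x, [] => List.replicate (m - x) Step.E
  | x, y :: l => List.replicate (y - x) Step.E ++ Step.N :: northPath m y l

section Paths

variable {m x y a b i : ℕ} {l l' : List ℕ} {w : List Step}

theorem le_of_isChain (h : List.IsChain (· ≤ ·) (x :: (l ++ [m]))) : x ≤ m :=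
  List.rel_of_pairwise_cons h.pairwise (by simp)

theorem countN_northPath (m x : ℕ) (l : List ℕ) : countN (northPath m x l) = l.length := by
  induction l generalizing x with
  | nil => simp [northPath, countN, List.count_replicate]
  | cons y l ih => simpa [northPath, countN, List.count_replicate] using ih y

theorem countE_northPath (h : List.IsChain (· ≤ ·) (x :: (l ++ [m]))) :
    countE (northPath m x l) = m - x := by
  induction l generalizing x with
  | nil => simp [northPath, countE]
  | cons y l ih =>
    obtain ⟨hxy, hl⟩ := List.isChain_cons_cons.1 h
    have hym := le_of_isChain hl
    have ihy : List.count Step.E (northPath m y l) = m - y := ih hl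
    simp only [northPath, countE, List.count_append, List.count_replicate_self, ne_eq, reduceCtorEq,
      not_false_eq_true, List.count_cons_of_ne, ihy]
    omega

theorem northPath_eq_E_cons (h : List.IsChain (· ≤ ·) ((x + 1) :: (l ++ [m]))) :
    northPath m x l = Step.E :: northPath m (x + 1) l := by
  cases l with
  | nil =>
    have hx := le_of_isChain h
    rw [northPath, northPath, ← List.replicate_succ]
    congr 1
    omega
  | cons y l =>
    have hx : x + 1 ≤ y := (List.isChain_cons_cons.1 h).1
    rw [northPath, northPath, ← List.cons_append, ← List.replicate_succ]
    congr 2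
    omega

theorem exists_eq_northPath (w : List Step) (x : ℕ) :
    ∃ l, List.IsChain (· ≤ ·) (x :: (l ++ [x + countE w])) ∧ w = northPath (x + countE w) x l := by
  induction w generalizing x with
  | nil => exact ⟨[], by simp, by simp [northPath, countE]⟩
  | cons s w ih =>
    cases s with
    | E =>
      obtain ⟨l, hl, hw⟩ := ih (x + 1)
      have hE : x + countE (Step.E :: w) = x + 1 + countE w := by
        simp only [countE, List.count_cons_self]
        omega
      rw [hE]
      refine ⟨l, ?_, by rw [northPath_eq_E_cons hl, ← hw]⟩
      exact hl.imp_head fun h => (Nat.le_succ x).trans h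
    | N =>
      obtain ⟨l, hl, hw⟩ := ih x
      have hE : countE (Step.N :: w) = countE w := by simp [countE]
      rw [hE]
      exact ⟨x :: l, by simpa using hl, by simpa [northPath] using hw⟩

theorem northPath_inj (h : List.IsChain (· ≤ ·) (x :: (l ++ [m])))
    (h' : List.IsChain (· ≤ ·) (x :: (l' ++ [m]))) (e : northPath m x l = northPath m x l') :
    l = l' := by
  have hlen : l.length = l'.length := by
    rw [← countN_northPath m x l, ← countN_northPath m x l', e]
  induction l generalizing x l' with
  | nil => exact (List.length_eq_zero_iff.1 hlen.symm).symm
  | cons y l ih =>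
    obtain ⟨y', l', rfl⟩ := List.exists_cons_of_length_eq_add_one hlen.symm
    obtain ⟨hxy, hl⟩ := List.isChain_cons_cons.1 h
    obtain ⟨hxy', hl'⟩ := List.isChain_cons_cons.1 h'
    rw [northPath, northPath] at e
    have hN (k : ℕ) : Step.N ∉ List.replicate k Step.E := by simp [List.mem_replicate]
    obtain rfl : y = y' := by
      have hidx := congrArg (List.idxOf Step.N) e
      rw [List.idxOf_append_of_notMem (hN _), List.idxOf_append_of_notMem (hN _),
        List.idxOf_cons_self, List.idxOf_cons_self, List.length_replicate,
        List.length_replicate] at hidx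
      omega
    have htail := (List.cons.inj (List.append_cancel_left e)).2
    rw [ih hl hl' htail (Nat.succ.inj hlen)]

theorem mem_pathPts {p : ℕ × ℕ} : p ∈ pathPts w ↔ ∃ v, v <+: w ∧ pathPos v = p := by
  simp only [pathPts, List.mem_toFinset, List.mem_map, List.mem_range, Nat.lt_succ_iff]
  constructor
  · rintro ⟨i, -, rfl⟩
    exact ⟨_, List.take_prefix i w, rfl⟩
  · rintro ⟨v, hv, rfl⟩
    exact ⟨v.length, hv.length_le, by rw [← List.prefix_iff_eq_take.1 hv]⟩

theorem mem_pathPts_cons {s : Step} {p : ℕ × ℕ} :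
    p ∈ pathPts (s :: w) ↔ p = 0 ∨ ∃ q ∈ pathPts w, pathPos [s] + q = p := by
  have hcons (v : List Step) : pathPos (s :: v) = pathPos [s] + pathPos v := by
    simp [pathPos, countE, countN, List.count_cons, add_comm]
  have hnil : pathPos [] = 0 := rfl
  simp only [mem_pathPts, List.prefix_cons_iff]
  constructor
  · rintro ⟨v, rfl | ⟨v, rfl, hv⟩, rfl⟩
    · exact .inl hnil
    · exact .inr ⟨_, ⟨v, hv, rfl⟩, (hcons v).symm⟩
  · rintro (rfl | ⟨_, ⟨v, hv, rfl⟩, rfl⟩)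
    · exact ⟨[], .inl rfl, hnil⟩
    · exact ⟨s :: v, .inr ⟨v, rfl, hv⟩, hcons v⟩

theorem mem_pathPts_E_cons :
    (a, b) ∈ pathPts (Step.E :: w) ↔ a = 0 ∧ b = 0 ∨ 1 ≤ a ∧ (a - 1, b) ∈ pathPts w := by
  have hE : pathPos [Step.E] = (1, 0) := rfl
  rw [mem_pathPts_cons, hE]
  cases a <;> simp [Prod.ext_iff, add_comm 1]

theorem mem_pathPts_N_cons :
    (a, b) ∈ pathPts (Step.N :: w) ↔ a = 0 ∧ b = 0 ∨ 1 ≤ b ∧ (a, b - 1) ∈ pathPts w := by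
  have hN : pathPos [Step.N] = (0, 1) := rfl
  rw [mem_pathPts_cons, hN]
  cases b <;> simp [Prod.ext_iff, add_comm 1]

theorem mem_pathPts_replicate_append (k : ℕ) :
    (a, b) ∈ pathPts (List.replicate k Step.E ++ w) ↔
      a < k ∧ b = 0 ∨ k ≤ a ∧ (a - k, b) ∈ pathPts w := by
  induction k generalizing a with
  | zero => simp
  | succ k ih =>
    rw [List.replicate_succ, List.cons_append, mem_pathPts_E_cons, ih, Nat.sub_sub, add_comm 1 k]
    by_cases hw : (a - (k + 1), b) ∈ pathPts w <;>
      simp only [hw, and_true, and_false, or_false] <;> omega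

theorem pathPts_nil : pathPts [] = {(0, 0)} := rfl

theorem mem_pathPts_northPath_nil :
    (a, b) ∈ pathPts (northPath m x []) ↔ a ≤ m - x ∧ b = 0 := by
  rw [northPath, ← List.append_nil (List.replicate _ _), mem_pathPts_replicate_append, pathPts_nil,
    Finset.mem_singleton, Prod.mk.injEq]
  omega

theorem mem_pathPts_northPath_cons_zero :
    (a, 0) ∈ pathPts (northPath m x (y :: l)) ↔ a ≤ y - x := by
  rw [northPath, mem_pathPts_replicate_append, mem_pathPts_N_cons]
  omega

theorem mem_pathPts_northPath_cons_succ :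
    (a, b + 1) ∈ pathPts (northPath m x (y :: l)) ↔
      y - x ≤ a ∧ (a - (y - x), b) ∈ pathPts (northPath m y l) := by
  rw [northPath, mem_pathPts_replicate_append, mem_pathPts_N_cons, Nat.add_sub_cancel]
  simp

theorem getD_colHeightsAux_replicate_append (k c i : ℕ) (w : List Step) :
    (colHeightsAux (List.replicate k Step.E ++ w) c).getD i 0 =
      if i < k then c else (colHeightsAux w c).getD (i - k) 0 := by
  induction k generalizing i with
  | zero => simp
  | succ k ih =>
    rw [List.replicate_succ, List.cons_append, colHeightsAux]
    cases i with
    | zero => simp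
    | succ i => simpa using ih i

theorem getD_colHeightsAux_northPath (h : List.IsChain (· ≤ ·) (x :: (l ++ [m])))
    (hxi : x ≤ i) (him : i < m) (c : ℕ) :
    (colHeightsAux (northPath m x l) c).getD (i - x) 0 = c + l.countP (· ≤ i) := by
  induction l generalizing x c with
  | nil =>
    rw [northPath, ← List.append_nil (List.replicate _ _), getD_colHeightsAux_replicate_append,
      if_pos (by omega), List.countP_nil, add_zero]
  | cons y l ih =>
    obtain ⟨hxy, hl⟩ := List.isChain_cons_cons.1 h
    rw [northPath, getD_colHeightsAux_replicate_append]
    split_ifs with hi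
    · have hlt : ∀ z ∈ y :: l, i < z := by
        have hy := List.pairwise_cons.1 hl.pairwise
        intro z hz
        rcases List.mem_cons.1 hz with rfl | hz
        · omega
        · have := hy.1 z (by simp [hz])
          omega
      rw [List.countP_eq_zero.2 (by simpa using hlt), add_zero]
    · have hyi : y ≤ i := by omega
      rw [colHeightsAux, show i - x - (y - x) = i - y by omega, ih hl hyi,
        List.countP_cons_of_pos (by simpa using hyi)]
      omega

end Paths

section ColumnHeights

variable {m i : ℕ} {l : List ℕ}

theorem colHeight_northPath (h : List.IsChain (· ≤ ·) (0 :: (l ++ [m]))) (hi : i < m) :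
    colHeight (northPath m 0 l) i = l.countP (· ≤ i) := by
  have := getD_colHeightsAux_northPath h i.zero_le hi 0
  rwa [Nat.sub_zero, zero_add] at this

theorem sum_colHeight_northPath (h : List.IsChain (· ≤ ·) (0 :: (l ++ [m]))) :
    ∑ i ∈ Finset.range m, colHeight (northPath m 0 l) i = (l.map (m - ·)).sum := by
  rw [Finset.sum_congr rfl fun i hi => colHeight_northPath h (Finset.mem_range.1 hi)]
  clear h
  induction l with
  | nil => simp
  | cons y l ih =>
    have hy : (Finset.range m).filter (y ≤ ·) = Finset.Ico y m := by
      ext i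
      simp [and_comm]
    simp only [List.countP_cons, decide_eq_true_eq, Finset.sum_add_distrib, ih, List.map_cons,
      List.sum_cons, ← Finset.card_filter, hy, Nat.card_Ico, add_comm]

end ColumnHeights

/-! ### Polyominoes of size `m × 3` -/

namespace PolyominoShape

variable {m i : ℕ}

theorem isChain_upper (x : PolyominoShape m) :
    List.IsChain (· ≤ ·) (0 :: ([0, x.u₂, x.u₃] ++ [m])) := by
  simp [x.u₂_le_u₃, x.u₃_lt_l₂.le.trans x.l₂_le]

theorem isChain_lower (x : PolyominoShape m) :
    List.IsChain (· ≤ ·) (0 :: ([x.l₁, x.l₂, m] ++ [m])) := by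
  simp [x.l₁_le_l₂, x.l₂_le]

theorem colHeight_upper (x : PolyominoShape m) (hi : i < m) :
    colHeight (northPath m 0 [0, x.u₂, x.u₃]) i =
      if i < x.u₂ then 1 else if i < x.u₃ then 2 else 3 := by
  have := x.u₂_le_u₃
  rw [colHeight_northPath x.isChain_upper hi]
  simp only [List.countP_cons, List.countP_nil, decide_eq_true_eq]
  split_ifs <;> omega

theorem colHeight_lower (x : PolyominoShape m) (hi : i < m) :
    colHeight (northPath m 0 [x.l₁, x.l₂, m]) i =
      if i < x.l₁ then 0 else if i < x.l₂ then 1 else 2 := by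
  have := x.l₁_le_l₂
  rw [colHeight_northPath x.isChain_lower hi]
  simp only [List.countP_cons, List.countP_nil, decide_eq_true_eq]
  split_ifs <;> omega

/-- The polyomino described by a `PolyominoShape`. -/
def toPolyomino (x : PolyominoShape m) : Polyomino m 3 where
  lower := northPath m 0 [x.l₁, x.l₂, m]
  upper := northPath m 0 [0, x.u₂, x.u₃]
  lowerE := countE_northPath x.isChain_lower
  lowerN := countN_northPath _ _ _
  upperE := countE_northPath x.isChain_upper
  upperN := countN_northPath _ _ _
  above i hi := by
    rw [x.colHeight_upper hi, x.colHeight_lower hi]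
    have := x.u₂_lt_l₁
    have := x.u₃_lt_l₂
    split_ifs <;> omega
  meet := by
    obtain ⟨u₂, u₃, l₁, l₂, _, _, _, _, _⟩ := x
    ext ⟨a, b⟩
    rcases b with _ | _ | _ | _ | b <;>
      simp only [Finset.mem_inter, Finset.mem_insert, Finset.mem_singleton, Prod.mk.injEq,
        mem_pathPts_northPath_cons_zero, mem_pathPts_northPath_cons_succ,
        mem_pathPts_northPath_nil, and_true] <;> omega

theorem toPolyomino_injective : Function.Injective (toPolyomino (m := m)) := by
  intro x y h
  have hu := northPath_inj x.isChain_upper y.isChain_upper (congrArg Polyomino.upper h)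
  have hl := northPath_inj x.isChain_lower y.isChain_lower (congrArg Polyomino.lower h)
  simp only [List.cons.injEq] at hu hl
  exact PolyominoShape.ext hu.2.1 hu.2.2.1 hl.1 hl.2.1

end PolyominoShape

theorem exists_eq_northPath_triple {m : ℕ} {w : List Step} (hE : countE w = m)
    (hN : countN w = 3) :
    ∃ p q r, List.IsChain (· ≤ ·) (0 :: ([p, q, r] ++ [m])) ∧ w = northPath m 0 [p, q, r] := by
  obtain ⟨l, hl, hw⟩ := exists_eq_northPath w 0
  rw [zero_add, hE] at hl hw
  rw [hw, countN_northPath] at hN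
  obtain ⟨p, q, r, rfl⟩ := List.length_eq_three.1 hN
  exact ⟨p, q, r, hl, hw⟩

theorem PolyominoShape.toPolyomino_surjective {m : ℕ} :
    Function.Surjective (PolyominoShape.toPolyomino (m := m)) := by
  rintro ⟨lower, upper, hlE, hlN, huE, huN, above, meet⟩
  obtain ⟨l₁, l₂, l₃, hl, rfl⟩ := exists_eq_northPath_triple hlE hlN
  obtain ⟨u₁, u₂, u₃, hu, rfl⟩ := exists_eq_northPath_triple huE huN
  obtain ⟨hl₁₂, hl₂₃, hl₃⟩ : l₁ ≤ l₂ ∧ l₂ ≤ l₃ ∧ l₃ ≤ m := by simpa using hl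
  obtain ⟨hu₁₂, hu₂₃, hu₃⟩ : u₁ ≤ u₂ ∧ u₂ ≤ u₃ ∧ u₃ ≤ m := by simpa using hu
  have hrow₀ (a : ℕ) := Finset.ext_iff.1 meet (a, 0)
  have hrow₁ (a : ℕ) := Finset.ext_iff.1 meet (a, 1)
  have hrow₂ (a : ℕ) := Finset.ext_iff.1 meet (a, 2)
  have hrow₃ (a : ℕ) := Finset.ext_iff.1 meet (a, 3)
  simp only [Finset.mem_inter, Finset.mem_insert, Finset.mem_singleton, Prod.mk.injEq,
    mem_pathPts_northPath_cons_zero, mem_pathPts_northPath_cons_succ,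
    mem_pathPts_northPath_nil, and_true] at hrow₀ hrow₁ hrow₂ hrow₃
  have hu₁ : u₁ = 0 := by
    by_contra h
    have hl₁ : l₁ = 0 := by
      have := hrow₀ 1
      omega
    have hm : 0 < m := by omega
    have hcol := above 0 hm
    rw [colHeight_northPath hl hm, colHeight_northPath hu hm] at hcol
    simp only [List.countP_cons, List.countP_nil, decide_eq_true_eq] at hcol
    split_ifs at hcol <;> omega
  obtain rfl := hu₁
  have hul : u₂ < l₁ := by
    by_contra! h
    have := hrow₁ l₁
    omega
  have hul' : u₃ < l₂ := by
    by_contra! h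
    have := hrow₂ l₂
    omega
  obtain rfl : l₃ = m := by
    have := hrow₃ l₃
    omega
  exact ⟨{ u₂, u₃, l₁, l₂ }, rfl⟩

theorem PolyominoShape.area_toPolyomino {m : ℕ} (x : PolyominoShape m) :
    area x.toPolyomino = x.l₁ + x.l₂ - x.u₂ - x.u₃ - 2 := by
  have hU : ∑ i ∈ Finset.range m, colHeight x.toPolyomino.upper i =
      m + (m - x.u₂) + (m - x.u₃) :=
    (sum_colHeight_northPath x.isChain_upper).trans (by simp [add_assoc])
  have hL : ∑ i ∈ Finset.range m, colHeight x.toPolyomino.lower i = (m - x.l₁) + (m - x.l₂) :=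
    (sum_colHeight_northPath x.isChain_lower).trans (by simp)
  rw [area, Finset.sum_tsub_distrib _ fun i hi => x.toPolyomino.above i (Finset.mem_range.1 hi),
    hU, hL]
  obtain ⟨u₂, u₃, l₁, l₂, _, _, _, _, _⟩ := x
  dsimp only
  omega

/-! ### The bounce statistic of a polyomino of size `m × 3` -/

theorem eastTarget_eq {hL : ℕ → ℕ} {m x y z : ℕ} (hz : z ≤ m)
    (h : ∀ i < m, x ≤ i ∧ y ≤ hL i ↔ z ≤ i) : eastTarget hL m x y = z := by
  have hfilter : (List.range m).filter (fun i => decide (x ≤ i ∧ y ≤ hL i)) =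
      (List.range m).filter (z ≤ ·) :=
    List.filter_congr fun i hi => by simp only [h i (List.mem_range.1 hi)]
  obtain ⟨k, rfl⟩ := Nat.exists_eq_add_of_le hz
  have hmap : ((List.range k).map (z + ·)).filter (z ≤ ·) = (List.range k).map (z + ·) := by simp
  have hrange : (List.range z).filter (z ≤ ·) = [] := by simp
  rw [eastTarget, hfilter, List.range_add, List.filter_append, hrange, hmap]
  cases k <;> simp [List.range_succ_eq_map]

theorem bounceAux_self (hU hL : ℕ → ℕ) (m n fuel j : ℕ) :
    bounceAux hU hL m n fuel m n j = 0 := by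
  cases fuel <;> simp [bounceAux]

theorem bounceAux_of_eq_top {hU hL : ℕ → ℕ} {m n x y : ℕ} (fuel j : ℕ) (hy : y ≠ n)
    (hU_eq : hU (x - 1) = n) :
    bounceAux hU hL m n (fuel + 1) x y j = (j + 1) * (n - y + (m - x)) := by
  rw [bounceAux, if_neg (by tauto)]
  simp only [hU_eq, if_true, bounceAux_self, add_zero]

theorem bounceAux_of_ne_top {hU hL : ℕ → ℕ} {m n x y x' y' : ℕ} (fuel j : ℕ) (hy : y ≠ n)
    (hU_eq : hU (x - 1) = y') (hy' : y' ≠ n) (hx' : eastTarget hL m x y' = x') :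
    bounceAux hU hL m n (fuel + 1) x y j =
      (j + 1) * (y' - y + (x' - x)) + bounceAux hU hL m n fuel x' y' (j + 1) := by
  rw [bounceAux, if_neg (by tauto)]
  simp only [hU_eq, if_neg hy', hx']

namespace PolyominoShape

variable {m : ℕ} (x : PolyominoShape m)

theorem eastTarget_one (h : x.u₂ ≠ 0) :
    eastTarget (colHeight x.toPolyomino.lower) m 1 1 = x.l₁ := by
  obtain ⟨u₂, u₃, l₁, l₂, _, _, _, _, _⟩ := x
  refine eastTarget_eq (by dsimp only; omega) fun i hi => ?_
  rw [toPolyomino, colHeight_lower _ hi]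
  dsimp only at h ⊢
  split_ifs <;> omega

theorem eastTarget_two {a : ℕ} (h : a ≤ x.l₂) :
    eastTarget (colHeight x.toPolyomino.lower) m a 2 = x.l₂ := by
  obtain ⟨u₂, u₃, l₁, l₂, _, _, _, _, _⟩ := x
  refine eastTarget_eq (by dsimp only; omega) fun i hi => ?_
  rw [toPolyomino, colHeight_lower _ hi]
  dsimp only at h ⊢
  split_ifs <;> omega

theorem bounce_toPolyomino :
    bounce x.toPolyomino =
      if x.u₂ = 0 then if x.u₃ = 0 then 0 else m + 1 - x.l₂
      else if x.u₃ < x.l₁ then m + 2 - x.l₁ else 2 * m + 3 - x.l₁ - x.l₂ := by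
  have := x.u₂_le_u₃
  have := x.l₁_le_l₂
  have := x.u₂_lt_l₁
  have := x.u₃_lt_l₂
  have := x.l₂_le
  have hU (a : ℕ) (ha : 0 < a ∧ a ≤ m) := x.colHeight_upper (i := a - 1) (by omega)
  have hU₁ (h : x.u₂ ≠ 0) : colHeight x.toPolyomino.upper (1 - 1) = 1 :=
    (hU 1 (by omega)).trans (by split_ifs <;> omega)
  have hU₂ (a : ℕ) (h : x.u₂ < a) (h' : a ≤ x.u₃) : colHeight x.toPolyomino.upper (a - 1) = 2 :=
    (hU a (by omega)).trans (by split_ifs <;> omega)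
  have hU₃ (a : ℕ) (h : x.u₃ < a) (h' : a ≤ m) : colHeight x.toPolyomino.upper (a - 1) = 3 :=
    (hU a (by omega)).trans (by split_ifs <;> omega)
  rw [bounce]
  split_ifs with h₂ h₃ h₃
  · rw [bounceAux_of_eq_top _ _ (by simp) (hU₃ 1 (by omega) (by omega))]
    omega
  · rw [bounceAux_of_ne_top _ _ (by simp) (hU₂ 1 (by omega) (by omega)) (by simp)
        (x.eastTarget_two (by omega)),
      bounceAux_of_eq_top _ _ (by simp) (hU₃ _ (by omega) (by omega))]
    omega
  · rw [bounceAux_of_ne_top _ _ (by simp) (hU₁ h₂) (by simp) (x.eastTarget_one h₂),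
      bounceAux_of_eq_top _ _ (by simp) (hU₃ _ h₃ (by omega))]
    omega
  · rw [bounceAux_of_ne_top _ _ (by simp) (hU₁ h₂) (by simp) (x.eastTarget_one h₂),
      bounceAux_of_ne_top _ _ (by simp) (hU₂ _ (by omega) (by omega)) (by simp)
        (x.eastTarget_two (by omega)),
      bounceAux_of_eq_top _ _ (by simp) (hU₃ _ (by omega) (by omega))]
    omega

end PolyominoShape

theorem exists_narayanaTerm_equiv_polyomino (m : ℕ) :
    ∃ e : NarayanaTerm m ≃ Polyomino m 3, ∀ y, area (e y) = y.qExp ∧ bounce (e y) = y.tExp := by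
  let e := Equiv.ofBijective (PolyominoShape.toPolyomino (m := m))
    ⟨PolyominoShape.toPolyomino_injective, PolyominoShape.toPolyomino_surjective⟩
  refine ⟨PolyominoShape.equivTerm.symm.trans e, fun y => ?_⟩
  obtain ⟨x, rfl⟩ := PolyominoShape.equivTerm.surjective y
  rw [Equiv.trans_apply, Equiv.symm_apply_apply]
  exact ⟨x.area_toPolyomino.trans x.qExp_toTerm.symm,
    x.bounce_toPolyomino.trans x.tExp_toTerm.symm⟩

/-! ### Partitions and their non-singleton blocks -/

theorem fmax_eq {β : Finset ℕ} {M : ℕ} (hM : M ∈ β) (hle : ∀ x ∈ β, x ≤ M) : fmax β = M :=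
  le_antisymm (Finset.sup_le hle) (Finset.le_sup (f := id) hM)

theorem fmin_eq {β : Finset ℕ} {M : ℕ} (hM : M ∈ β) (hle : ∀ x ∈ β, M ≤ x) : fmin β = M := by
  rw [fmin, dif_pos ⟨M, hM⟩]
  exact le_antisymm (Finset.min'_le _ _ hM) (Finset.le_min' _ _ _ hle)

theorem fmax_mem {β : Finset ℕ} (h : β.Nonempty) : fmax β ∈ β := by
  obtain ⟨M, hM, hsup⟩ := Finset.exists_mem_eq_sup β h id
  rwa [fmax, hsup]

/-- A family of disjoint subsets of `{1, …, n}`, none of them empty or a singleton: the possible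
values of `nsBlocks` on the partitions of `{1, …, n}`. -/
structure IsPartialPartition (n : ℕ) (N : Finset (Finset ℕ)) : Prop where
  subset : ∀ β ∈ N, β ⊆ Finset.Icc 1 n
  two_le_card : ∀ β ∈ N, 2 ≤ β.card
  disjoint : ∀ β ∈ N, ∀ γ ∈ N, β ≠ γ → Disjoint β γ

/-- The family `N` together with a singleton for each element of `{1, …, n}` it does not cover. -/
def withSingletons (n : ℕ) (N : Finset (Finset ℕ)) : Finset (Finset ℕ) :=
  N ∪ {i ∈ Finset.Icc 1 n | ∀ β ∈ N, i ∉ β}.image singleton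

section Partitions

variable {n : ℕ} {N : Finset (Finset ℕ)} {β : Finset ℕ}

theorem mem_withSingletons :
    β ∈ withSingletons n N ↔ β ∈ N ∨ ∃ i ∈ Finset.Icc 1 n, (∀ γ ∈ N, i ∉ γ) ∧ β = {i} := by
  simp only [withSingletons, Finset.mem_union, Finset.mem_image, Finset.mem_filter, and_assoc,
    eq_comm]

theorem nsBlocks_withSingletons (hN : ∀ β ∈ N, 2 ≤ β.card) : nsBlocks (withSingletons n N) = N := by
  ext β
  rw [nsBlocks, Finset.mem_filter, mem_withSingletons]
  constructor
  · rintro ⟨hβ | ⟨i, -, -, rfl⟩, hcard⟩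
    · exact hβ
    · simp at hcard
  · exact fun hβ => ⟨.inl hβ, hN β hβ⟩

theorem IsNoncrossing.mono {bs : Finset (Finset ℕ)} (h : IsNoncrossing bs) (hN : N ⊆ bs) :
    IsNoncrossing N :=
  fun a b c d hab hbc hcd β hβ γ hγ => h a b c d hab hbc hcd β (hN hβ) γ (hN hγ)

theorem IsNoncrossing.withSingletons (h : IsNoncrossing N) :
    IsNoncrossing (withSingletons n N) := by
  intro a b c d hab hbc hcd β hβ γ hγ ha hc hb hd
  rcases mem_withSingletons.1 hβ with hβ | ⟨i, -, -, rfl⟩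
  · rcases mem_withSingletons.1 hγ with hγ | ⟨i, -, -, rfl⟩
    · exact h a b c d hab hbc hcd β hβ γ hγ ha hc hb hd
    · have := Finset.mem_singleton.1 hb
      have := Finset.mem_singleton.1 hd
      omega
  · have := Finset.mem_singleton.1 ha
    have := Finset.mem_singleton.1 hc
    omega

/-- The partition of `{1, …, n}` whose non-singleton blocks are those of `N`. -/
def IsPartialPartition.toSetPartition (hN : IsPartialPartition n N) : SetPartition n where
  blocks := withSingletons n N
  not_empty_mem h := by
    rcases mem_withSingletons.1 h with h | ⟨i, -, -, h⟩
    · simpa using hN.two_le_card _ h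
    · exact Finset.singleton_ne_empty i h.symm
  cover i := by
    constructor
    · intro hi
      by_cases hN : ∃ β ∈ N, i ∈ β
      · obtain ⟨β, hβ, hiβ⟩ := hN
        exact ⟨β, mem_withSingletons.2 (.inl hβ), hiβ⟩
      · push Not at hN
        exact ⟨{i}, mem_withSingletons.2 (.inr ⟨i, hi, hN, rfl⟩), Finset.mem_singleton_self i⟩
    · rintro ⟨β, hβ, hiβ⟩
      rcases mem_withSingletons.1 hβ with hβ | ⟨j, hj, -, rfl⟩
      · exact hN.subset β hβ hiβ
      · rwa [Finset.mem_singleton.1 hiβ]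
  disjoint β hβ γ hγ hne := by
    rcases mem_withSingletons.1 hβ with hβ | ⟨i, -, hi, rfl⟩ <;>
    rcases mem_withSingletons.1 hγ with hγ | ⟨j, -, hj, rfl⟩
    · exact hN.disjoint β hβ γ hγ hne
    · exact Finset.disjoint_singleton_right.2 (hj β hβ)
    · exact Finset.disjoint_singleton_left.2 (hi γ hγ)
    · simpa using hne

theorem IsPartialPartition.nsBlocks_toSetPartition (hN : IsPartialPartition n N) :
    nsBlocks hN.toSetPartition.blocks = N :=
  nsBlocks_withSingletons hN.two_le_card

namespace SetPartition

variable (P : SetPartition n)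

theorem nonempty_of_mem_blocks (hβ : β ∈ P.blocks) : β.Nonempty :=
  Finset.nonempty_iff_ne_empty.2 fun h => P.not_empty_mem (h ▸ hβ)

theorem eq_of_mem_of_mem {γ : Finset ℕ} {i : ℕ} (hβ : β ∈ P.blocks) (hγ : γ ∈ P.blocks)
    (hiβ : i ∈ β) (hiγ : i ∈ γ) : β = γ := by
  by_contra hne
  exact Finset.disjoint_left.1 (P.disjoint β hβ γ hγ hne) hiβ hiγ

theorem blocks_injective : Function.Injective (blocks (n := n)) := by
  rintro ⟨_, _, _, _⟩ ⟨_, _, _, _⟩ rfl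
  rfl

theorem isPartialPartition_nsBlocks : IsPartialPartition n (nsBlocks P.blocks) where
  subset β hβ i hi := (P.cover i).2 ⟨β, (Finset.mem_filter.1 hβ).1, hi⟩
  two_le_card _ hβ := (Finset.mem_filter.1 hβ).2
  disjoint β hβ γ hγ := P.disjoint β (Finset.mem_filter.1 hβ).1 γ (Finset.mem_filter.1 hγ).1

theorem withSingletons_nsBlocks : withSingletons n (nsBlocks P.blocks) = P.blocks := by
  ext β
  rw [mem_withSingletons]
  constructor
  · rintro (hβ | ⟨i, hi, hns, rfl⟩)
    · exact (Finset.mem_filter.1 hβ).1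
    · obtain ⟨β, hβ, hiβ⟩ := (P.cover i).1 hi
      have hcard : ¬ 2 ≤ β.card := fun h => hns β (Finset.mem_filter.2 ⟨hβ, h⟩) hiβ
      rwa [← Finset.eq_singleton_or_nontrivial hiβ |>.resolve_right]
      rwa [← Finset.one_lt_card_iff_nontrivial]
  · intro hβ
    obtain ⟨i, hi⟩ := P.nonempty_of_mem_blocks hβ
    rcases Finset.eq_singleton_or_nontrivial hi with rfl | hnt
    · refine .inr ⟨i, (P.cover i).2 ⟨_, hβ, hi⟩, fun γ hγ hiγ => ?_, rfl⟩
      obtain ⟨hγ, hcard⟩ := Finset.mem_filter.1 hγ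
      rw [← P.eq_of_mem_of_mem hβ hγ hi hiγ, Finset.card_singleton] at hcard
      omega
    · exact .inl (Finset.mem_filter.2 ⟨hβ, Finset.one_lt_card_iff_nontrivial.2 hnt⟩)

theorem biUnion_blocks : P.blocks.biUnion id = Finset.Icc 1 n := by
  ext i
  simp [P.cover i]

theorem sum_nsBlocks_add_card_blocks :
    ∑ β ∈ nsBlocks P.blocks, (β.card - 1) + P.blocks.card = n := by
  have hns : ∑ β ∈ nsBlocks P.blocks, (β.card - 1) = ∑ β ∈ P.blocks, (β.card - 1) := by
    refine Finset.sum_subset (Finset.filter_subset _ _) fun β hβ h => ?_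
    have : ¬ 2 ≤ β.card := fun hcard => h (Finset.mem_filter.2 ⟨hβ, hcard⟩)
    omega
  have hn : ∑ β ∈ P.blocks, β.card = n := by
    have h := Finset.card_biUnion (s := P.blocks) (t := id) fun β hβ γ hγ => P.disjoint β hβ γ hγ
    rw [P.biUnion_blocks, Nat.card_Icc] at h
    simpa using h.symm
  rw [hns, Finset.card_eq_sum_ones, ← Finset.sum_add_distrib]
  refine (Finset.sum_congr rfl fun β hβ => ?_).trans hn
  exact Nat.sub_add_cancel (P.nonempty_of_mem_blocks hβ).card_pos

end SetPartition

end Partitions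

/-! ### The area of a partition -/

theorem fmax_singleton (i : ℕ) : fmax {i} = i :=
  Finset.sup_singleton

theorem fmax_pair {a b : ℕ} (h : a < b) : fmax {a, b} = b :=
  fmax_eq (by simp) (by simp [h.le])

theorem fmin_pair {a b : ℕ} (h : a < b) : fmin {a, b} = a :=
  fmin_eq (by simp) (by simp [h.le])

theorem fmax_triple {a b d : ℕ} (hab : a < b) (hbd : b < d) : fmax {a, b, d} = d :=
  fmax_eq (by simp) (by simp [hbd.le, (hab.trans hbd).le])

/-- The elements of the blocks of `N` that are not the maximum of their block. -/
def nonMaxima (N : Finset (Finset ℕ)) : Finset ℕ :=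
  N.biUnion fun β => β.erase (fmax β)

theorem ncArea_eq_sum_nsBlocks (bs : Finset (Finset ℕ)) :
    ncArea bs = ∑ γ ∈ nsBlocks bs, ∑ i ∈ γ, {β ∈ bs | i < fmax β ∧ fmax β < fmax γ}.card := by
  have hcomm : ncArea bs =
      ∑ γ ∈ bs, ∑ i ∈ γ, {β ∈ bs | i < fmax β ∧ fmax β < fmax γ}.card := by
    rw [ncArea, Finset.sum_comm]
    refine Finset.sum_congr rfl fun γ _ => ?_
    simp only [Finset.card_filter]
    exact Finset.sum_comm
  rw [hcomm]
  refine (Finset.sum_subset (Finset.filter_subset _ _) fun γ hγ hns => ?_).symm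
  refine Finset.sum_eq_zero fun i hi => ?_
  have hcard : ¬ 2 ≤ γ.card := fun h => hns (Finset.mem_filter.2 ⟨hγ, h⟩)
  obtain rfl : γ = {i} := (Finset.eq_singleton_or_nontrivial hi).resolve_right fun h =>
    hcard (Finset.one_lt_card_iff_nontrivial.2 h)
  rw [Finset.card_eq_zero, Finset.filter_eq_empty_iff, fmax_singleton]
  omega

namespace SetPartition

variable {n : ℕ} (P : SetPartition n)

theorem fmax_injOn_blocks : Set.InjOn fmax (P.blocks : Set (Finset ℕ)) := fun _ hβ _ hγ h =>
  P.eq_of_mem_of_mem hβ hγ (fmax_mem (P.nonempty_of_mem_blocks hβ))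
    (h ▸ fmax_mem (P.nonempty_of_mem_blocks hγ))

theorem image_fmax_blocks :
    P.blocks.image fmax = Finset.Icc 1 n \ nonMaxima (nsBlocks P.blocks) := by
  ext k
  simp only [Finset.mem_image, Finset.mem_sdiff, nonMaxima, Finset.mem_biUnion, Finset.mem_erase]
  constructor
  · rintro ⟨β, hβ, rfl⟩
    have hmem := fmax_mem (P.nonempty_of_mem_blocks hβ)
    refine ⟨(P.cover _).2 ⟨β, hβ, hmem⟩, fun ⟨γ, hγ, hne, hγmem⟩ => hne ?_⟩
    rw [P.eq_of_mem_of_mem hβ (Finset.mem_filter.1 hγ).1 hmem hγmem]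
  · rintro ⟨hk, hns⟩
    obtain ⟨β, hβ, hkβ⟩ := (P.cover k).1 hk
    refine ⟨β, hβ, ?_⟩
    by_contra hne
    refine hns ⟨β, Finset.mem_filter.2 ⟨hβ, ?_⟩, Ne.symm hne, hkβ⟩
    exact Finset.one_lt_card.2 ⟨_, fmax_mem ⟨k, hkβ⟩, _, hkβ, hne⟩

theorem card_filter_fmax_mem_Ioo (i : ℕ) {M : ℕ} (hM : M ≤ n) :
    {β ∈ P.blocks | i < fmax β ∧ fmax β < M}.card =
      (Finset.Ioo i M \ nonMaxima (nsBlocks P.blocks)).card := by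
  have himage : {β ∈ P.blocks | i < fmax β ∧ fmax β < M}.image fmax =
      Finset.Ioo i M \ nonMaxima (nsBlocks P.blocks) := by
    rw [← Finset.filter_image (p := fun k => i < k ∧ k < M), P.image_fmax_blocks]
    ext k
    simp only [Finset.mem_filter, Finset.mem_sdiff, Finset.mem_Icc, Finset.mem_Ioo]
    constructor
    · exact fun h => ⟨h.2, h.1.2⟩
    · exact fun h => ⟨⟨by omega, h.2⟩, h.1⟩
  rw [← himage, Finset.card_image_of_injOn]
  exact P.fmax_injOn_blocks.mono (Finset.coe_subset.2 (Finset.filter_subset _ _))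

theorem ncArea_blocks :
    ncArea P.blocks = ∑ γ ∈ nsBlocks P.blocks, ∑ i ∈ γ,
      (Finset.Ioo i (fmax γ) \ nonMaxima (nsBlocks P.blocks)).card := by
  rw [ncArea_eq_sum_nsBlocks]
  refine Finset.sum_congr rfl fun γ hγ => Finset.sum_congr rfl fun i hi => ?_
  have hmem := P.isPartialPartition_nsBlocks.subset γ hγ (fmax_mem ⟨i, hi⟩)
  exact P.card_filter_fmax_mem_Ioo i (Finset.mem_Icc.1 hmem).2

end SetPartition

theorem card_Ioo_sdiff_pair {i x : ℕ} (M y : ℕ) (hx : x ≤ i) :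
    (Finset.Ioo i M \ {x, y}).card = if i < y ∧ y < M then M - i - 2 else M - i - 1 := by
  have herase : Finset.Ioo i M \ {x, y} = (Finset.Ioo i M).erase y := by
    ext k
    simp only [Finset.mem_sdiff, Finset.mem_Ioo, Finset.mem_insert, Finset.mem_singleton,
      Finset.mem_erase]
    omega
  rw [herase]
  split_ifs with hy
  · rw [Finset.card_erase_of_mem (Finset.mem_Ioo.2 hy), Nat.card_Ioo]
    omega
  · rw [Finset.erase_eq_of_notMem (by rwa [Finset.mem_Ioo]), Nat.card_Ioo]

/-! ### Noncrossing partitions of `{1, …, n}` into `n - 2` blocks -/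

namespace NoncrossingQuad

variable {n : ℕ} (x : NoncrossingQuad n)

/-- The non-singleton blocks encoded by a quadruple. -/
def blocks : Finset (Finset ℕ) :=
  if x.b = x.c then {{x.a, x.b, x.d}} else {{x.a, x.b}, {x.c, x.d}}

variable {x}

theorem blocks_of_eq (h : x.b = x.c) : x.blocks = {{x.a, x.b, x.d}} :=
  if_pos h

theorem blocks_of_ne (h : x.b ≠ x.c) : x.blocks = {{x.a, x.b}, {x.c, x.d}} :=
  if_neg h

variable (x)

theorem disjoint_pairs (h : x.b ≠ x.c) : Disjoint ({x.a, x.b} : Finset ℕ) {x.c, x.d} := by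
  obtain ⟨a, b, c, d, _, _, _, _, _, _, _⟩ := x
  simp only [Finset.disjoint_left, Finset.mem_insert, Finset.mem_singleton] at h ⊢
  omega

theorem pair_ne_pair (h : x.b ≠ x.c) : ({x.a, x.b} : Finset ℕ) ≠ {x.c, x.d} :=
  (x.disjoint_pairs h).ne (Finset.insert_ne_empty _ _)

theorem card_triple (h : x.b = x.c) : ({x.a, x.b, x.d} : Finset ℕ).card = 3 := by
  have hbd : x.b < x.d := h ▸ x.c_lt_d
  exact Finset.card_eq_three.2
    ⟨_, _, _, x.a_lt_b.ne, (x.a_lt_b.trans hbd).ne, hbd.ne, rfl⟩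

theorem isPartialPartition_blocks : IsPartialPartition n x.blocks := by
  by_cases h : x.b = x.c
  · rw [blocks_of_eq h]
    refine ⟨?_, ?_, ?_⟩ <;> simp only [Finset.mem_singleton, forall_eq]
    · obtain ⟨a, b, c, d, _, _, _, _, _, _, _⟩ := x
      simp only [Finset.insert_subset_iff, Finset.singleton_subset_iff, Finset.mem_Icc]
      omega
    · rw [x.card_triple h]
      omega
    · exact fun hne => absurd rfl hne
  · have hdisj := x.disjoint_pairs h
    rw [blocks_of_ne h]
    refine ⟨?_, ?_, ?_⟩ <;>
      simp only [Finset.mem_insert, Finset.mem_singleton, forall_eq_or_imp, forall_eq]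
    · obtain ⟨a, b, c, d, _, _, _, _, _, _, _⟩ := x
      simp only [Finset.insert_subset_iff, Finset.singleton_subset_iff, Finset.mem_Icc]
      omega
    · exact ⟨(Finset.card_pair x.a_lt_b.ne).ge, (Finset.card_pair x.c_lt_d.ne).ge⟩
    · exact ⟨⟨fun hne => absurd rfl hne, fun _ => hdisj⟩,
        fun _ => hdisj.symm, fun hne => absurd rfl hne⟩

theorem isNoncrossing_blocks : IsNoncrossing x.blocks := by
  intro p q r s hpq hqr hrs β hβ γ hγ
  by_cases h : x.b = x.c
  · rw [blocks_of_eq h, Finset.mem_singleton] at hβ hγ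
    exact fun _ _ _ _ => hβ.trans hγ.symm
  · rw [blocks_of_ne h, Finset.mem_insert, Finset.mem_singleton] at hβ hγ
    obtain ⟨a, b, c, d, _, _, _, _, _, _, _⟩ := x
    dsimp only at h
    rcases hβ with rfl | rfl <;> rcases hγ with rfl | rfl
    · exact fun _ _ _ _ => rfl
    · simp only [Finset.mem_insert, Finset.mem_singleton]
      omega
    · simp only [Finset.mem_insert, Finset.mem_singleton]
      omega
    · exact fun _ _ _ _ => rfl

theorem sum_blocks : ∑ β ∈ x.blocks, (β.card - 1) = 2 := by
  by_cases h : x.b = x.c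
  · rw [blocks_of_eq h, Finset.sum_singleton, x.card_triple h]
  · rw [blocks_of_ne h, Finset.sum_pair (x.pair_ne_pair h), Finset.card_pair x.a_lt_b.ne,
      Finset.card_pair x.c_lt_d.ne]

theorem nonMaxima_blocks : nonMaxima x.blocks = {x.a, x.c} := by
  by_cases h : x.b = x.c
  · rw [blocks_of_eq h, nonMaxima, Finset.singleton_biUnion,
      fmax_triple x.a_lt_b (h ▸ x.c_lt_d), h]
    obtain ⟨a, b, c, d, _, _, _, _, _, _, _⟩ := x
    ext k
    simp only [Finset.mem_erase, Finset.mem_insert, Finset.mem_singleton]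
    omega
  · rw [blocks_of_ne h, nonMaxima, Finset.biUnion_insert, Finset.singleton_biUnion,
      fmax_pair x.a_lt_b, fmax_pair x.c_lt_d]
    obtain ⟨a, b, c, d, _, _, _, _, _, _, _⟩ := x
    ext k
    simp only [Finset.mem_erase, Finset.mem_insert, Finset.mem_singleton, Finset.mem_union]
    omega

theorem fmin_sup_blocks : fmin (x.blocks.sup id) = x.a := by
  by_cases h : x.b = x.c
  · rw [blocks_of_eq h, Finset.sup_singleton]
    obtain ⟨a, b, c, d, _, _, _, _, _, _, _⟩ := x
    refine fmin_eq (Finset.mem_insert_self _ _) ?_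
    simp only [id, Finset.mem_insert, Finset.mem_singleton] at h ⊢
    omega
  · rw [blocks_of_ne h, Finset.sup_insert, Finset.sup_singleton]
    obtain ⟨a, b, c, d, _, _, _, _, _, _, _⟩ := x
    refine fmin_eq (Finset.mem_union_left _ (Finset.mem_insert_self _ _)) ?_
    simp only [id, Finset.sup_eq_union, Finset.mem_union, Finset.mem_insert, Finset.mem_singleton]
    omega

variable {bs : Finset (Finset ℕ)}

theorem blockQuad_eq_of_eq (h : x.b = x.c) (hbs : nsBlocks bs = x.blocks) :
    blockQuad bs = (x.a, x.b, x.c, x.d) := by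
  have hbd : x.b < x.d := h ▸ x.c_lt_d
  have hA : blockContaining x.blocks x.a = {x.a, x.b, x.d} := by
    simp [blocks_of_eq h, blockContaining, Finset.filter_singleton]
  have hsort : ({x.a, x.b, x.d} : Finset ℕ).sort (· ≤ ·) = [x.a, x.b, x.d] := by
    rw [Finset.sort_insert _ (by simp [x.a_lt_b.le, (x.a_lt_b.trans hbd).le])
        (by simp [x.a_lt_b.ne, (x.a_lt_b.trans hbd).ne]),
      Finset.sort_insert _ (by simp [hbd.le]) (by simp [hbd.ne]), Finset.sort_singleton]
  simp only [blockQuad, hbs, x.fmin_sup_blocks, hA, hsort]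
  simp [blocks_of_eq h, ← h]

theorem blockQuad_eq_of_ne (h : x.b ≠ x.c) (hbs : nsBlocks bs = x.blocks) :
    blockQuad bs = (x.a, x.b, x.c, x.d) := by
  have hne := x.pair_ne_pair h
  have ha : x.a ∉ ({x.c, x.d} : Finset ℕ) :=
    Finset.disjoint_left.1 (x.disjoint_pairs h) (Finset.mem_insert_self _ _)
  have hA : blockContaining x.blocks x.a = {x.a, x.b} := by
    rw [blocks_of_ne h, blockContaining, Finset.filter_insert,
      if_pos (Finset.mem_insert_self _ _), Finset.filter_singleton, if_neg ha]
    exact Finset.sup_singleton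
  have hB : (x.blocks.erase {x.a, x.b}).sup id = {x.c, x.d} := by
    rw [blocks_of_ne h, Finset.erase_insert (Finset.notMem_singleton.2 hne)]
    exact Finset.sup_singleton
  have hcard : x.blocks.card ≠ 1 := by
    rw [blocks_of_ne h, Finset.card_pair hne]
    omega
  simp only [blockQuad, hbs, x.fmin_sup_blocks, hA, hB, if_neg hcard, fmin_pair x.a_lt_b,
    fmax_pair x.a_lt_b, fmin_pair x.c_lt_d, fmax_pair x.c_lt_d]

theorem blockQuad_eq (hbs : nsBlocks bs = x.blocks) : blockQuad bs = (x.a, x.b, x.c, x.d) := by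
  by_cases h : x.b = x.c
  · exact x.blockQuad_eq_of_eq h hbs
  · exact x.blockQuad_eq_of_ne h hbs

theorem skew_eq (hbs : nsBlocks bs = x.blocks) :
    skew bs = if x.b < x.c then x.c - 2 + x.a else x.c - 2 := by
  simp only [skew, x.blockQuad_eq hbs]

theorem ncArea_eq {P : SetPartition n} (hP : nsBlocks P.blocks = x.blocks) :
    ncArea P.blocks =
      if x.b = x.c then 2 * x.d - x.a - x.b - 3
      else if x.b < x.c then x.b - x.a + x.d - x.c - 2 else x.b - x.a + x.d - x.c - 3 := by
  rw [P.ncArea_blocks, hP, x.nonMaxima_blocks]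
  by_cases h : x.b = x.c
  · rw [blocks_of_eq h, Finset.sum_singleton, fmax_triple x.a_lt_b (h ▸ x.c_lt_d), if_pos h]
    obtain ⟨a, b, c, d, _, _, _, _, _, _, _⟩ := x
    dsimp only at h ⊢
    rw [Finset.sum_insert (by simp; omega), Finset.sum_pair (by omega),
      card_Ioo_sdiff_pair _ _ (by omega), card_Ioo_sdiff_pair _ _ (by omega),
      card_Ioo_sdiff_pair _ _ (by omega)]
    split_ifs <;> omega
  · rw [blocks_of_ne h, Finset.sum_pair (x.pair_ne_pair h), fmax_pair x.a_lt_b,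
      fmax_pair x.c_lt_d, Finset.sum_pair x.a_lt_b.ne, Finset.sum_pair x.c_lt_d.ne, if_neg h]
    obtain ⟨a, b, c, d, _, _, _, _, _, _, _⟩ := x
    dsimp only at h ⊢
    rw [card_Ioo_sdiff_pair _ _ (by omega), card_Ioo_sdiff_pair _ _ (by omega),
      card_Ioo_sdiff_pair _ _ (by omega), card_Ioo_sdiff_pair _ _ (by omega)]
    split_ifs <;> omega

end NoncrossingQuad

theorem exists_lt_eq_pair {α : Type*} [LinearOrder α] {s : Finset α} (hs : s.card = 2) :
    ∃ a b, a < b ∧ s = {a, b} := by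
  obtain ⟨a, b, hne, rfl⟩ := Finset.card_eq_two.1 hs
  rcases hne.lt_or_gt with h | h
  · exact ⟨a, b, h, rfl⟩
  · exact ⟨b, a, h, Finset.pair_comm a b⟩

theorem exists_lt_lt_eq_triple {α : Type*} [LinearOrder α] {s : Finset α} (hs : s.card = 3) :
    ∃ a b c, a < b ∧ b < c ∧ s = {a, b, c} := by
  have hne : s.Nonempty := Finset.card_pos.1 (by omega)
  have hmin := s.min'_mem hne
  obtain ⟨b, c, hbc, h⟩ := exists_lt_eq_pair (s := s.erase (s.min' hne)) <| by
    rw [Finset.card_erase_of_mem hmin, hs]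
  refine ⟨s.min' hne, b, c, ?_, hbc, by rw [← h, Finset.insert_erase hmin]⟩
  exact s.min'_lt_of_mem_erase_min' hne (h ▸ Finset.mem_insert_self b {c})

namespace IsPartialPartition

variable {n : ℕ} {β γ : Finset ℕ}

theorem exists_blocks_eq_singleton (h : IsPartialPartition n {β}) (hβ : β.card = 3) :
    ∃ x : NoncrossingQuad n, x.blocks = {β} := by
  obtain ⟨a, b, d, hab, hbd, rfl⟩ := exists_lt_lt_eq_triple hβ
  have hsub := h.subset _ (Finset.mem_singleton_self _)
  simp only [Finset.insert_subset_iff, Finset.singleton_subset_iff, Finset.mem_Icc] at hsub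
  exact ⟨{ a := a, b := b, c := b, d := d }, NoncrossingQuad.blocks_of_eq rfl⟩

theorem exists_blocks_eq_pair (h : IsPartialPartition n {β, γ}) (hnc : IsNoncrossing {β, γ})
    (hne : β ≠ γ) (hβ : β.card = 2) (hγ : γ.card = 2) :
    ∃ x : NoncrossingQuad n, x.blocks = {β, γ} := by
  have hβmem : β ∈ ({β, γ} : Finset (Finset ℕ)) := Finset.mem_insert_self _ _
  have hγmem : γ ∈ ({β, γ} : Finset (Finset ℕ)) :=
    Finset.mem_insert_of_mem (Finset.mem_singleton_self _)
  obtain ⟨a, b, hab, rfl⟩ := exists_lt_eq_pair hβ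
  obtain ⟨c, d, hcd, rfl⟩ := exists_lt_eq_pair hγ
  have hdisj := h.disjoint _ hβmem _ hγmem hne
  wlog hac : a < c generalizing a b c d
  · rw [Finset.pair_comm] at h hnc hβmem hγmem ⊢
    refine this c d hcd hγ a b hab hβ h hnc hne.symm hγmem hβmem hdisj.symm ?_
    simp only [Finset.disjoint_insert_left, Finset.disjoint_singleton_left, Finset.mem_insert,
      Finset.mem_singleton] at hdisj
    omega
  have hsubβ := h.subset _ hβmem
  have hsubγ := h.subset _ hγmem
  have hcross : ¬ (c < b ∧ b < d) := fun ⟨hcb, hbd⟩ =>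
    hne (hnc a c b d hac hcb hbd _ hβmem _ hγmem (by simp) (by simp) (by simp) (by simp))
  simp only [Finset.insert_subset_iff, Finset.singleton_subset_iff, Finset.mem_Icc] at hsubβ hsubγ
  simp only [Finset.disjoint_insert_left, Finset.disjoint_singleton_left, Finset.mem_insert,
    Finset.mem_singleton] at hdisj
  have hbc : b ≠ c := by omega
  exact ⟨{ a := a, b := b, c := c, d := d }, NoncrossingQuad.blocks_of_ne hbc⟩

end IsPartialPartition

namespace NoncrossingQuad

variable {n : ℕ}

/-- The partition in `NC n 3` encoded by a quadruple. -/
def toNC (x : NoncrossingQuad n) : NC n 3 :=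
  ⟨x.isPartialPartition_blocks.toSetPartition, x.isNoncrossing_blocks.withSingletons, by
    have hcard := x.isPartialPartition_blocks.toSetPartition.sum_nsBlocks_add_card_blocks
    rw [x.isPartialPartition_blocks.nsBlocks_toSetPartition, x.sum_blocks] at hcard
    have := x.one_le_a
    have := x.a_lt_b
    have := x.a_lt_c
    have := x.c_lt_d
    have := x.d_le
    omega⟩

theorem nsBlocks_toNC (x : NoncrossingQuad n) : nsBlocks x.toNC.val.blocks = x.blocks :=
  x.isPartialPartition_blocks.nsBlocks_toSetPartition

theorem toNC_injective : Function.Injective (toNC (n := n)) := by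
  intro x y h
  have hquad := x.blockQuad_eq x.nsBlocks_toNC
  rw [h, y.blockQuad_eq y.nsBlocks_toNC] at hquad
  simp only [Prod.mk.injEq] at hquad
  exact NoncrossingQuad.ext hquad.1.symm hquad.2.1.symm hquad.2.2.1.symm hquad.2.2.2.symm

theorem toNC_eq_of_blocks_eq {x : NoncrossingQuad n} {P : NC n 3}
    (h : x.blocks = nsBlocks P.val.blocks) : x.toNC = P := by
  refine Subtype.ext (SetPartition.blocks_injective ?_)
  rw [← x.toNC.val.withSingletons_nsBlocks, ← P.val.withSingletons_nsBlocks, x.nsBlocks_toNC, h]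

theorem exists_blocks_eq_nsBlocks (hn : 3 ≤ n) (P : NC n 3) :
    ∃ x : NoncrossingQuad n, x.blocks = nsBlocks P.val.blocks := by
  obtain ⟨P, hnc, hcard⟩ := P
  have hN := P.isPartialPartition_nsBlocks
  have hncN : IsNoncrossing (nsBlocks P.blocks) := hnc.mono (Finset.filter_subset _ _)
  have hsum : ∑ β ∈ nsBlocks P.blocks, (β.card - 1) = 2 := by
    have := P.sum_nsBlocks_add_card_blocks
    omega
  dsimp only
  generalize nsBlocks P.blocks = N at *
  have hle : N.card ≤ 2 := by
    rw [← hsum, Finset.card_eq_sum_ones]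
    exact Finset.sum_le_sum fun β hβ => Nat.le_sub_one_of_lt (hN.two_le_card β hβ)
  interval_cases hcardN : N.card
  · rw [Finset.card_eq_zero.1 hcardN, Finset.sum_empty] at hsum
    omega
  · obtain ⟨β, rfl⟩ := Finset.card_eq_one.1 hcardN
    rw [Finset.sum_singleton] at hsum
    exact hN.exists_blocks_eq_singleton (by omega)
  · obtain ⟨β, γ, hne, rfl⟩ := Finset.card_eq_two.1 hcardN
    rw [Finset.sum_pair hne] at hsum
    have hβ := hN.two_le_card β (Finset.mem_insert_self _ _)
    have hγ := hN.two_le_card γ (Finset.mem_insert_of_mem (Finset.mem_singleton_self _))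
    exact hN.exists_blocks_eq_pair hncN hne (by omega) (by omega)

theorem toNC_surjective (hn : 3 ≤ n) : Function.Surjective (toNC (n := n)) := fun P =>
  (exists_blocks_eq_nsBlocks hn P).imp fun _ h => toNC_eq_of_blocks_eq h

end NoncrossingQuad

theorem exists_narayanaTerm_equiv_nc {m : ℕ} (hm : 1 ≤ m) :
    ∃ e : NarayanaTerm m ≃ NC (m + 2) 3,
      ∀ y, skew (e y).val.blocks = y.qExp ∧ ncArea (e y).val.blocks = y.tExp := by
  let e : NoncrossingQuad (m + 2) ≃ NC (m + 2) 3 :=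
    Equiv.ofBijective _ ⟨NoncrossingQuad.toNC_injective, NoncrossingQuad.toNC_surjective (by omega)⟩
  refine ⟨NoncrossingQuad.equivTerm.symm.trans e, fun y => ?_⟩
  obtain ⟨x, rfl⟩ := NoncrossingQuad.equivTerm.surjective y
  rw [Equiv.trans_apply, Equiv.symm_apply_apply]
  exact ⟨(x.skew_eq x.nsBlocks_toNC).trans x.qExp_toTerm.symm,
    (x.ncArea_eq x.nsBlocks_toNC).trans x.tExp_toTerm.symm⟩

/-- The pair (skew, area) is a combinatorial interpretation of `N_{n,3}(q,t)`:
for all `n ≥ 3` and `u v`, the number of `π ∈ NC(n,3)` with `skew π = u` and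
`area π = v` equals the number of `P ∈ PP(n-2,3)` with `area P = u`, `bounce P = v`. -/
theorem skew_area_pair (n u v : ℕ) (hn : 3 ≤ n) :
    Nat.card {π : NC n 3 // skew π.val.blocks = u ∧ ncArea π.val.blocks = v} =
    Nat.card {P : Polyomino (n - 2) 3 // area P = u ∧ bounce P = v} := by
  obtain ⟨m, rfl⟩ : ∃ m, n = m + 2 := ⟨n - 2, by omega⟩
  obtain ⟨e₁, he₁⟩ := exists_narayanaTerm_equiv_nc (m := m) (by omega)
  obtain ⟨e₂, he₂⟩ := exists_narayanaTerm_equiv_polyomino m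
  refine Nat.card_congr ((e₁.symm.trans e₂).subtypeEquiv fun π => ?_)
  obtain ⟨y, rfl⟩ := e₁.surjective π
  rw [Equiv.trans_apply, Equiv.symm_apply_apply, (he₁ y).1, (he₁ y).2, (he₂ y).1, (he₂ y).2]

end QtN
end

section
/- For every fixed k ≥ 1, each coefficient of the q,t-Narayana polynomial N_{m,k}(q,t) is nondecreasing in m; equivalently, for all m ≥ k+1 and all natural numbers u, v, the number of parallelogram polyominoes P ∈ PP(m−k, k) with area(P) = u and bounce(P) = v is at most the number of P ∈ PP(m−k+1, k) with area(P) = u and bounce(P) = v, so that the incremental polynomial N_{m,k}(q,t) − N_{m−1,k}(q,t) has nonnegative coefficients. -/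
namespace QtN

/-!
Adding a column to a polyomino `P` without changing its area or bounce: let `h ≥ 1` be the height
of the first east step of the upper path, and insert one extra east step at height `h` into the
upper path and one at height `h - 1` into the lower path. The number of cells between the paths
grows by `h - (h - 1) = 1`. The first bounce run climbs to height `h` as before, and its eastward
part becomes one step longer; from there on the two polyominoes differ by a translation by `(1, 0)`,
so the total bounce weight also grows by exactly `1`. Both increments are absorbed by the
normalisation `m + n - 1`. The map is injective because `h` can be read off from the new upper path.
-/

section OrderedInsert

variable {α : Type*} [LinearOrder α]

lemma getD_zero_orderedInsert_le (a d : α) (l : List α) :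
    (l.orderedInsert (· ≤ ·) a).getD 0 d ≤ a := by
  cases l with
  | nil => simp
  | cons b l =>
    rcases le_or_gt a b with hab | hab
    · simp [hab]
    · simp [hab.not_ge, hab.le]

lemma le_getD_succ_orderedInsert_iff {a b : α} (hab : a < b) (d : α) (l : List α) (i : ℕ) :
    b ≤ (l.orderedInsert (· ≤ ·) a).getD (i + 1) d ↔ b ≤ l.getD i d := by
  induction l generalizing i with
  | nil => simp
  | cons c l ih =>
    rcases le_or_gt a c with hac | hca
    · simp [hac]
    · rw [List.orderedInsert_of_not_le _ _ hca.not_ge]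
      cases i with
      | zero =>
        exact iff_of_false ((getD_zero_orderedInsert_le a d l).trans_lt hab).not_ge
          (hca.trans hab).not_ge
      | succ i => simpa only [List.getD_cons_succ] using ih i

end OrderedInsert

lemma sum_range_getD_length {M : Type*} [AddCommMonoid M] (l : List M) :
    ∑ i ∈ Finset.range l.length, l.getD i 0 = l.sum := by
  induction l with
  | nil => rfl
  | cons a l ih =>
    simp only [List.length_cons, Finset.sum_range_succ', List.getD_cons_succ, ih,
      List.getD_cons_zero, List.sum_cons, add_comm]

section Paths

variable {w : List Step} {i x y : ℕ}

@[simp] lemma countE_nil : countE [] = 0 := rfl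

@[simp] lemma countN_nil : countN [] = 0 := rfl

@[simp] lemma countE_east_cons (w : List Step) : countE (Step.E :: w) = countE w + 1 := by
  simp [countE]

@[simp] lemma countE_north_cons (w : List Step) : countE (Step.N :: w) = countE w := by
  simp [countE]

@[simp] lemma countN_east_cons (w : List Step) : countN (Step.E :: w) = countN w := by
  simp [countN]

@[simp] lemma countN_north_cons (w : List Step) : countN (Step.N :: w) = countN w + 1 := by
  simp [countN]

lemma length_eq_countE_add_countN (w : List Step) : w.length = countE w + countN w := by
  induction w with
  | nil => rfl
  | cons s w ih => cases s <;> simp [ih] <;> omega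

lemma length_colHeightsAux (w : List Step) (s : ℕ) : (colHeightsAux w s).length = countE w := by
  induction w generalizing s with
  | nil => rfl
  | cons a w ih => cases a <;> simp [colHeightsAux, ih]

lemma mem_Icc_of_mem_colHeightsAux {s : ℕ} (hy : y ∈ colHeightsAux w s) :
    y ∈ Set.Icc s (s + countN w) := by
  induction w generalizing s with
  | nil => simp [colHeightsAux] at hy
  | cons a w ih =>
    cases a with
    | E =>
      rcases List.mem_cons.1 hy with rfl | hy
      · simp
      · simpa using ih hy
    | N =>
      obtain ⟨hs, hN⟩ := ih hy
      rw [countN_north_cons]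
      constructor <;> omega

lemma pairwise_le_colHeightsAux (w : List Step) (s : ℕ) :
    (colHeightsAux w s).Pairwise (· ≤ ·) := by
  induction w generalizing s with
  | nil => exact .nil
  | cons a w ih =>
    cases a with
    | E => exact .cons (fun _ hy ↦ (mem_Icc_of_mem_colHeightsAux hy).1) (ih s)
    | N => exact ih (s + 1)

lemma colHeight_mono {j : ℕ} (hij : i ≤ j) (hj : j < countE w) :
    colHeight w i ≤ colHeight w j := by
  have hlen := length_colHeightsAux w 0
  have hmono := (pairwise_le_colHeightsAux w 0).sortedLE.monotone_get
  unfold colHeight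
  rw [List.getD_eq_getElem _ _ (by omega), List.getD_eq_getElem _ _ (by omega)]
  exact hmono (a := ⟨i, by omega⟩) (b := ⟨j, by omega⟩) hij

lemma colHeight_le_countN (hi : i < countE w) : colHeight w i ≤ countN w := by
  have hlen := length_colHeightsAux w 0
  unfold colHeight
  rw [List.getD_eq_getElem _ _ (by omega)]
  simpa using (mem_Icc_of_mem_colHeightsAux (w := w) (s := 0) (List.getElem_mem (hlen ▸ hi))).2

lemma colHeight_east_cons_zero (w : List Step) : colHeight (Step.E :: w) 0 = 0 := rfl

lemma colHeightsAux_succ (w : List Step) (s : ℕ) :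
    colHeightsAux w (s + 1) = (colHeightsAux w s).map (· + 1) := by
  induction w generalizing s with
  | nil => rfl
  | cons a w ih => cases a <;> simp [colHeightsAux, ih]

lemma colHeight_north_cons (hi : i < countE w) :
    colHeight (Step.N :: w) i = colHeight w i + 1 := by
  have hlen := length_colHeightsAux w 0
  simp only [colHeight, colHeightsAux, colHeightsAux_succ]
  rw [List.getD_eq_getElem _ _ (by simpa [hlen]), List.getD_eq_getElem _ _ (by omega),
    List.getElem_map]

lemma sum_range_colHeight (w : List Step) :
    ∑ i ∈ Finset.range (countE w), colHeight w i = (colHeightsAux w 0).sum := by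
  rw [← length_colHeightsAux w 0]
  exact sum_range_getD_length _

lemma mem_pathPts_iff_exists_prefix {p : ℕ × ℕ} :
    p ∈ pathPts w ↔ ∃ u, u <+: w ∧ pathPos u = p := by
  simp only [pathPts, List.mem_toFinset, List.mem_map, List.mem_range]
  constructor
  · rintro ⟨i, -, hi⟩
    exact ⟨w.take i, List.take_prefix i w, hi⟩
  · rintro ⟨u, huw, hu⟩
    exact ⟨u.length, Nat.lt_succ_of_le huw.length_le, by rwa [← List.prefix_iff_eq_take.1 huw]⟩

lemma zero_mem_pathPts (w : List Step) : (0, 0) ∈ pathPts w :=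
  mem_pathPts_iff_exists_prefix.2 ⟨[], List.nil_prefix, rfl⟩

lemma pathPos_mem_pathPts (w : List Step) : pathPos w ∈ pathPts w :=
  mem_pathPts_iff_exists_prefix.2 ⟨w, List.prefix_rfl, rfl⟩

lemma mem_pathPts_nil : (x, y) ∈ pathPts [] ↔ x = 0 ∧ y = 0 := by
  simp [mem_pathPts_iff_exists_prefix, pathPos, eq_comm]

lemma mem_pathPts_east_cons :
    (x, y) ∈ pathPts (Step.E :: w) ↔ x = 0 ∧ y = 0 ∨ ∃ x', x = x' + 1 ∧ (x', y) ∈ pathPts w := by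
  simp only [mem_pathPts_iff_exists_prefix, List.prefix_cons_iff, pathPos, Prod.mk.injEq]
  constructor
  · rintro ⟨_, rfl | ⟨u, rfl, hu⟩, hx, hy⟩
    · exact .inl ⟨hx.symm, hy.symm⟩
    · exact .inr ⟨countE u, by simpa using hx.symm, u, hu, rfl, by simpa using hy⟩
  · rintro (⟨rfl, rfl⟩ | ⟨_, rfl, u, hu, rfl, rfl⟩)
    · exact ⟨[], .inl rfl, rfl, rfl⟩
    · exact ⟨Step.E :: u, .inr ⟨u, rfl, hu⟩, by simp⟩

lemma mem_pathPts_north_cons :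
    (x, y) ∈ pathPts (Step.N :: w) ↔ x = 0 ∧ y = 0 ∨ ∃ y', y = y' + 1 ∧ (x, y') ∈ pathPts w := by
  simp only [mem_pathPts_iff_exists_prefix, List.prefix_cons_iff, pathPos, Prod.mk.injEq]
  constructor
  · rintro ⟨_, rfl | ⟨u, rfl, hu⟩, hx, hy⟩
    · exact .inl ⟨hx.symm, hy.symm⟩
    · exact .inr ⟨countN u, by simpa using hy.symm, u, hu, by simpa using hx, rfl⟩
  · rintro (⟨rfl, rfl⟩ | ⟨_, rfl, u, hu, rfl, rfl⟩)
    · exact ⟨[], .inl rfl, rfl, rfl⟩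
    · exact ⟨Step.N :: u, .inr ⟨u, rfl, hu⟩, by simp⟩

lemma first_east_endpoints_mem_pathPts (hw : 0 < countE w) :
    (0, colHeight w 0) ∈ pathPts w ∧ (1, colHeight w 0) ∈ pathPts w := by
  induction w with
  | nil => simp at hw
  | cons s w ih =>
    cases s with
    | E => simp [colHeight_east_cons_zero, mem_pathPts_east_cons, zero_mem_pathPts]
    | N =>
      rw [countE_north_cons] at hw
      simpa [colHeight_north_cons hw, mem_pathPts_north_cons] using ih hw

end Paths

section InsertEast

variable {w : List Step} {h i x y : ℕ}

/-- The path obtained from `w` by inserting an east step at height `h`, immediately after the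
`h`-th north step. A path that ends below height `h` is returned unchanged. -/
def insertEast : ℕ → List Step → List Step
  | 0, w => Step.E :: w
  | _ + 1, [] => []
  | h + 1, Step.E :: w => Step.E :: insertEast (h + 1) w
  | h + 1, Step.N :: w => Step.N :: insertEast h w

lemma insertEast_injective (h : ℕ) : Function.Injective (insertEast h) := by
  intro v w
  fun_induction insertEast h v generalizing w with
  | case1 v => simp [insertEast]
  | case2 h => rcases w with _ | ⟨_ | _, w⟩ <;> simp [insertEast]
  | case3 h v ih =>
    rcases w with _ | ⟨_ | _, w⟩
    · simp [insertEast]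
    · simpa [insertEast] using @ih w
    · simp [insertEast]
  | case4 h v ih =>
    rcases w with _ | ⟨_ | _, w⟩
    · simp [insertEast]
    · simp [insertEast]
    · simpa [insertEast] using @ih w

lemma countE_insertEast (hw : h ≤ countN w) : countE (insertEast h w) = countE w + 1 := by
  fun_induction insertEast h w <;> simp_all

lemma countN_insertEast (h : ℕ) (w : List Step) : countN (insertEast h w) = countN w := by
  fun_induction insertEast h w <;> simp_all

lemma pathPos_insertEast (hw : h ≤ countN w) :
    pathPos (insertEast h w) = (countE w + 1, countN w) := by
  rw [pathPos, countE_insertEast hw, countN_insertEast]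

lemma colHeightsAux_insertEast (hw : h ≤ countN w) (s : ℕ) :
    colHeightsAux (insertEast h w) s = (colHeightsAux w s).orderedInsert (· ≤ ·) (s + h) := by
  fun_induction insertEast h w generalizing s with
  | case1 w =>
    rw [add_zero, colHeightsAux]
    cases hl : colHeightsAux w s with
    | nil => rfl
    | cons b l =>
      have hsb : s ≤ b := (mem_Icc_of_mem_colHeightsAux (by rw [hl]; exact List.mem_cons_self)).1
      rw [List.orderedInsert_cons_of_le _ _ hsb]
  | case2 h => simp at hw
  | case3 h w ih =>
    rw [colHeightsAux, colHeightsAux, List.orderedInsert_of_not_le _ _ (by omega),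
      ih (by simpa using hw)]
  | case4 h w ih =>
    rw [colHeightsAux, colHeightsAux, ih (by simpa using hw), add_right_comm, add_assoc]

lemma colHeight_insertEast_zero_le (hw : h ≤ countN w) : colHeight (insertEast h w) 0 ≤ h := by
  simpa [colHeight, colHeightsAux_insertEast hw] using
    getD_zero_orderedInsert_le h 0 (colHeightsAux w 0)

lemma le_colHeight_insertEast_succ_iff (hw : h ≤ countN w) (hy : h < y) :
    y ≤ colHeight (insertEast h w) (i + 1) ↔ y ≤ colHeight w i := by
  simpa [colHeight, colHeightsAux_insertEast hw] using
    le_getD_succ_orderedInsert_iff hy 0 (colHeightsAux w 0) i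

lemma sum_colHeight_insertEast (hw : h ≤ countN w) :
    ∑ i ∈ Finset.range (countE w + 1), colHeight (insertEast h w) i =
      ∑ i ∈ Finset.range (countE w), colHeight w i + h := by
  rw [← countE_insertEast hw, sum_range_colHeight, sum_range_colHeight,
    colHeightsAux_insertEast hw, (List.perm_orderedInsert _ _ _).sum_eq, List.sum_cons, zero_add,
    add_comm]

lemma colHeightsAux_insertEast_colHeight_zero (hw : 0 < countE w) :
    colHeightsAux (insertEast (colHeight w 0) w) 0 = colHeight w 0 :: colHeightsAux w 0 := by
  rw [colHeightsAux_insertEast (colHeight_le_countN hw), zero_add]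
  have hlen := length_colHeightsAux w 0
  unfold colHeight
  cases hl : colHeightsAux w 0 with
  | nil => rw [hl, List.length_nil] at hlen; omega
  | cons b l => simp

lemma colHeight_insertEast_colHeight_zero_zero (hw : 0 < countE w) :
    colHeight (insertEast (colHeight w 0) w) 0 = colHeight w 0 := by
  rw [colHeight, colHeightsAux_insertEast_colHeight_zero hw, List.getD_cons_zero]

lemma colHeight_insertEast_colHeight_zero_succ (hw : 0 < countE w) (i : ℕ) :
    colHeight (insertEast (colHeight w 0) w) (i + 1) = colHeight w i := by
  rw [colHeight, colHeightsAux_insertEast_colHeight_zero hw, List.getD_cons_succ, colHeight]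

lemma mem_pathPts_of_mem_insertEast (hp : (x, y) ∈ pathPts (insertEast h w)) :
    y ≤ h ∧ (x, y) ∈ pathPts w ∨ ∃ x', x = x' + 1 ∧ (x', y) ∈ pathPts w := by
  fun_induction insertEast h w generalizing x y with
  | case1 w =>
    rcases mem_pathPts_east_cons.1 hp with ⟨rfl, rfl⟩ | hp
    · exact .inl ⟨le_rfl, zero_mem_pathPts w⟩
    · exact .inr hp
  | case2 h =>
    obtain ⟨-, rfl⟩ := mem_pathPts_nil.1 hp
    exact .inl ⟨Nat.zero_le _, hp⟩
  | case3 h w ih =>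
    rcases mem_pathPts_east_cons.1 hp with ⟨rfl, rfl⟩ | ⟨x, rfl, hp⟩
    · exact .inl ⟨Nat.zero_le _, zero_mem_pathPts _⟩
    · simp only [mem_pathPts_east_cons]
      grind
  | case4 h w ih =>
    rcases mem_pathPts_north_cons.1 hp with ⟨rfl, rfl⟩ | ⟨y, rfl, hp⟩
    · exact .inl ⟨Nat.zero_le _, zero_mem_pathPts _⟩
    · simp only [mem_pathPts_north_cons]
      grind

lemma mem_pathPts_of_mem_insertEast_colHeight_zero (hw : 0 < countE w)
    (hp : (x, y) ∈ pathPts (insertEast (colHeight w 0) w)) :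
    x = 0 ∧ (x, y) ∈ pathPts w ∨
      ∃ x', x = x' + 1 ∧ colHeight w 0 ≤ y ∧ (x', y) ∈ pathPts w := by
  induction w generalizing x y with
  | nil => simp at hw
  | cons s w ih =>
    cases s with
    | E =>
      rw [colHeight_east_cons_zero, insertEast, mem_pathPts_east_cons] at hp
      rcases hp with ⟨rfl, rfl⟩ | ⟨x, rfl, hp⟩
      · exact .inl ⟨rfl, zero_mem_pathPts _⟩
      · exact .inr ⟨x, rfl, Nat.zero_le _, hp⟩
    | N =>
      rw [countE_north_cons] at hw
      rw [colHeight_north_cons hw] at hp ⊢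
      rw [insertEast, mem_pathPts_north_cons] at hp
      rcases hp with ⟨rfl, rfl⟩ | ⟨y, rfl, hp⟩
      · exact .inl ⟨rfl, zero_mem_pathPts _⟩
      · simp only [mem_pathPts_north_cons]
        rcases ih hw hp with ⟨hx, hp⟩ | ⟨x, rfl, hy, hp⟩
        · exact .inl ⟨hx, .inr ⟨y, rfl, hp⟩⟩
        · exact .inr ⟨x, rfl, Nat.succ_le_succ hy, .inr ⟨y, rfl, hp⟩⟩

end InsertEast

section Bounce

variable {hU hU' hL hL' : ℕ → ℕ} {m n x y : ℕ}

lemma eastTarget_mem_Icc (hL : ℕ → ℕ) (y : ℕ) (hx : x ≤ m) :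
    eastTarget hL m x y ∈ Set.Icc x m := by
  unfold eastTarget
  cases hf : (List.range m).filter (fun i ↦ decide (x ≤ i ∧ y ≤ hL i)) with
  | nil => exact ⟨hx, le_rfl⟩
  | cons b l =>
    have hb : b ∈ (List.range m).filter (fun i ↦ decide (x ≤ i ∧ y ≤ hL i)) :=
      hf ▸ List.mem_cons_self
    simp only [List.mem_filter, List.mem_range, decide_eq_true_eq] at hb
    exact ⟨hb.2.1, hb.1.le⟩

lemma eastTarget_succ_of_lt (m : ℕ) (hx : hL x < y) :
    eastTarget hL m (x + 1) y = eastTarget hL m x y := by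
  unfold eastTarget
  congr 2
  funext i
  rw [decide_eq_decide]
  exact and_congr_left fun hi ↦
    ⟨Nat.le_of_succ_le, fun hxi ↦ lt_of_le_of_ne hxi fun hxi' ↦ by subst hxi'; omega⟩

lemma eastTarget_shift (m x : ℕ) (hy : ∀ i, y ≤ hL' (i + 1) ↔ y ≤ hL i) :
    eastTarget hL' (m + 1) (x + 1) y = eastTarget hL m x y + 1 := by
  have hpred : ((fun i ↦ decide (x + 1 ≤ i ∧ y ≤ hL' i)) ∘ Nat.succ) =
      fun i ↦ decide (x ≤ i ∧ y ≤ hL i) := by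
    funext i
    simp [hy]
  unfold eastTarget
  rw [List.range_succ_eq_map, List.filter_cons_of_neg (by simp), List.filter_map, hpred]
  cases (List.range m).filter (fun i ↦ decide (x ≤ i ∧ y ≤ hL i)) <;> rfl

/-- The abscissa at which an eastward run of the bounce path at height `y`, starting at `x`, stops.
Along the top row `y = n` it runs to the endpoint `(m, n)`. -/
def eastStop (hL : ℕ → ℕ) (m n x y : ℕ) : ℕ :=
  if y = n then m else eastTarget hL m x y

lemma eastStop_mem_Icc (hL : ℕ → ℕ) (n y : ℕ) (hx : x ≤ m) :
    eastStop hL m n x y ∈ Set.Icc x m := by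
  unfold eastStop
  split_ifs
  · exact ⟨hx, le_rfl⟩
  · exact eastTarget_mem_Icc hL y hx

lemma eastStop_succ_of_lt (m n : ℕ) (hx : hL x < y) :
    eastStop hL m n (x + 1) y = eastStop hL m n x y := by
  rw [eastStop, eastStop, eastTarget_succ_of_lt m hx]

lemma eastStop_shift (m n x : ℕ) (hy : ∀ i, y ≤ hL' (i + 1) ↔ y ≤ hL i) :
    eastStop hL' (m + 1) n (x + 1) y = eastStop hL m n x y + 1 := by
  unfold eastStop
  split_ifs
  · rfl
  · exact eastTarget_shift m x hy

lemma bounceAux_succ (hU hL : ℕ → ℕ) (m n f x y j : ℕ) :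
    bounceAux hU hL m n (f + 1) x y j =
      if x = m ∧ y = n then 0
      else (j + 1) * ((hU (x - 1) - y) + (eastStop hL m n x (hU (x - 1)) - x)) +
        bounceAux hU hL m n f (eastStop hL m n x (hU (x - 1))) (hU (x - 1)) (j + 1) :=
  rfl

lemma bounceAux_eq_zero_of_fixed (hy : hU (x - 1) = y) (hx : eastStop hL m n x y = x) (f j : ℕ) :
    bounceAux hU hL m n f x y j = 0 := by
  induction f generalizing j with
  | zero => rfl
  | succ f ih => simp [bounceAux_succ, hy, hx, ih]

/-- Each bounce either moves strictly east or reaches a state that repeats forever, so `m - x + 1`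
units of fuel suffice. -/
lemma bounceAux_fuel_succ (hU hL : ℕ → ℕ) (n : ℕ) {f : ℕ} (hx : x ≤ m) (hf : m - x < f)
    (y j : ℕ) : bounceAux hU hL m n (f + 1) x y j = bounceAux hU hL m n f x y j := by
  induction f generalizing x y j with
  | zero => omega
  | succ f ih =>
    rw [bounceAux_succ hU hL m n (f + 1), bounceAux_succ hU hL m n f x]
    congr 2
    obtain ⟨hle, hlm⟩ := eastStop_mem_Icc hL n (hU (x - 1)) hx
    rcases hle.eq_or_lt with hfix | hlt
    · rw [← hfix, bounceAux_eq_zero_of_fixed rfl hfix.symm,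
        bounceAux_eq_zero_of_fixed rfl hfix.symm]
    · exact ih hlm (by omega) _ _

lemma bounceAux_shift (hU_shift : ∀ i, hU' (i + 1) = hU i)
    (hL_shift : ∀ i < m, ∀ l, hU i ≤ hL' (l + 1) ↔ hU i ≤ hL l) (f : ℕ) (hx₀ : 0 < x) (hx : x ≤ m)
    (y j : ℕ) :
    bounceAux hU' hL' (m + 1) n f (x + 1) y j = bounceAux hU hL m n f x y j := by
  induction f generalizing x y j with
  | zero => rfl
  | succ f ih =>
    have hnorth : hU' (x + 1 - 1) = hU (x - 1) := by
      rw [← hU_shift, Nat.sub_add_cancel hx₀, Nat.add_sub_cancel]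
    have heast := eastStop_shift m n x (hL_shift (x - 1) (by omega))
    obtain ⟨hle, hlm⟩ := eastStop_mem_Icc hL n (hU (x - 1)) hx
    simp only [bounceAux_succ, hnorth, heast, Nat.add_left_inj, Nat.add_sub_add_right,
      ih (hx₀.trans_le hle) hlm]

lemma bounceAux_widen (hm : 0 < m) (hn : 0 < n) (hU_zero : hU' 0 = hU 0)
    (hU_shift : ∀ i, hU' (i + 1) = hU i)
    (hL_shift : ∀ i < m, ∀ l, hU i ≤ hL' (l + 1) ↔ hU i ≤ hL l) (hL_one : hL' 1 < hU 0) :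
    bounceAux hU' hL' (m + 1) n (m + 1 + n + 2) 1 0 0 =
      bounceAux hU hL m n (m + n + 2) 1 0 0 + 1 := by
  obtain ⟨hle, hlm⟩ : eastStop hL m n 1 (hU 0) ∈ Set.Icc 1 m := eastStop_mem_Icc hL n (hU 0) hm
  have heast : eastStop hL' (m + 1) n 1 (hU 0) = eastStop hL m n 1 (hU 0) + 1 := by
    rw [← eastStop_succ_of_lt (m + 1) n hL_one, eastStop_shift m n 1 (hL_shift 0 hm)]
  have htail : bounceAux hU' hL' (m + 1) n (m + n + 1 + 1) (eastStop hL m n 1 (hU 0) + 1) (hU 0) 1 =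
      bounceAux hU hL m n (m + n + 1) (eastStop hL m n 1 (hU 0)) (hU 0) 1 := by
    rw [bounceAux_shift hU_shift hL_shift _ hle hlm, bounceAux_fuel_succ hU hL n hlm (by omega)]
  rw [show m + 1 + n + 2 = m + n + 1 + 1 + 1 by omega, bounceAux_succ hU',
    bounceAux_succ hU, if_neg (by omega), if_neg (by omega)]
  simp only [Nat.sub_self, hU_zero, heast, zero_add, htail]
  omega

end Bounce

namespace Polyomino

variable {m n : ℕ}

instance (m n : ℕ) : Finite (Polyomino m n) := by
  have : Finite Step := Finite.of_injective (· = Step.E) fun a b ↦ by cases a <;> cases b <;> simp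
  have : Finite {w : List Step | w.length = m + n} :=
    (List.finite_length_eq Step (m + n)).to_subtype
  let paths (P : Polyomino m n) :
      {w : List Step | w.length = m + n} × {w : List Step | w.length = m + n} :=
    (⟨P.lower, by rw [Set.mem_ofPred, length_eq_countE_add_countN, P.lowerE, P.lowerN]⟩,
      ⟨P.upper, by rw [Set.mem_ofPred, length_eq_countE_add_countN, P.upperE, P.upperN]⟩)
  refine Finite.of_injective paths fun P Q hPQ ↦ ?_
  cases P
  cases Q
  simpa [paths] using hPQ

lemma eq_endpoint_of_mem (P : Polyomino m n) {p : ℕ × ℕ} (hU : p ∈ pathPts P.upper)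
    (hL : p ∈ pathPts P.lower) : p = (0, 0) ∨ p = (m, n) := by
  simpa [P.meet] using Finset.mem_inter.2 ⟨hU, hL⟩

lemma colHeight_lower_zero_lt (hm : 0 < m) (hn : 0 < n) (P : Polyomino m n) :
    colHeight P.lower 0 < colHeight P.upper 0 := by
  refine lt_of_le_of_ne (P.above 0 hm) fun heq ↦ ?_
  obtain ⟨hU₀, hU₁⟩ := first_east_endpoints_mem_pathPts (w := P.upper) (by rwa [P.upperE])
  obtain ⟨hL₀, hL₁⟩ := first_east_endpoints_mem_pathPts (w := P.lower) (by rwa [P.lowerE])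
  rw [heq] at hL₀ hL₁
  have hstart := P.eq_endpoint_of_mem hU₀ hL₀
  have hend := P.eq_endpoint_of_mem hU₁ hL₁
  simp only [Prod.mk.injEq] at hstart hend
  omega

lemma colHeight_upper_zero_le_of_lt (P : Polyomino m n) {i : ℕ} (hi : i < m) :
    colHeight P.upper 0 ≤ colHeight P.upper i :=
  colHeight_mono i.zero_le (by rwa [P.upperE])

lemma colHeight_upper_zero_le (hm : 0 < m) (P : Polyomino m n) : colHeight P.upper 0 ≤ n :=
  (colHeight_le_countN (by rwa [P.upperE])).trans_eq P.upperN

lemma colHeight_upper_zero_pred_lt_countN_lower (hm : 0 < m) (hn : 0 < n) (P : Polyomino m n) :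
    colHeight P.upper 0 - 1 < countN P.lower := by
  have hlt := P.colHeight_lower_zero_lt hm hn
  have hle := P.colHeight_upper_zero_le hm
  rw [P.lowerN]
  omega

lemma colHeight_le_of_widened (hm : 0 < m) (hn : 0 < n) (P : Polyomino m n) {i : ℕ}
    (hi : i < m + 1) :
    colHeight (insertEast (colHeight P.upper 0 - 1) P.lower) i ≤
      colHeight (insertEast (colHeight P.upper 0) P.upper) i := by
  have hupper : 0 < countE P.upper := by rwa [P.upperE]
  have hlt := P.colHeight_lower_zero_lt hm hn
  have hlower := (P.colHeight_upper_zero_pred_lt_countN_lower hm hn).le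
  cases i with
  | zero =>
    rw [colHeight_insertEast_colHeight_zero_zero hupper]
    exact (colHeight_insertEast_zero_le hlower).trans (Nat.sub_le _ _)
  | succ i =>
    have him : i < m := Nat.lt_of_succ_lt_succ hi
    rw [colHeight_insertEast_colHeight_zero_succ hupper]
    by_contra! hcontra
    have hfirst := P.colHeight_upper_zero_le_of_lt him
    have habove := P.above i him
    rw [← Nat.succ_le_iff, le_colHeight_insertEast_succ_iff hlower (by omega)] at hcontra
    omega

lemma eq_endpoint_of_mem_widened (hm : 0 < m) (hn : 0 < n) (P : Polyomino m n) {p : ℕ × ℕ}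
    (hpU : p ∈ pathPts (insertEast (colHeight P.upper 0) P.upper))
    (hpL : p ∈ pathPts (insertEast (colHeight P.upper 0 - 1) P.lower)) :
    p = (0, 0) ∨ p = (m + 1, n) := by
  obtain ⟨x, y⟩ := p
  have hlt := P.colHeight_lower_zero_lt hm hn
  rcases mem_pathPts_of_mem_insertEast_colHeight_zero (by rwa [P.upperE]) hpU with
      ⟨rfl, hxU⟩ | ⟨x, rfl, hy, hxU⟩ <;>
    rcases mem_pathPts_of_mem_insertEast hpL with ⟨hy', hxL⟩ | ⟨x', hx', hxL⟩
  · have hend := P.eq_endpoint_of_mem hxU hxL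
    simp only [Prod.mk.injEq, true_and] at hend ⊢
    omega
  · omega
  · omega
  · obtain rfl : x = x' := Nat.succ_injective hx'
    have hend := P.eq_endpoint_of_mem hxU hxL
    simp only [Prod.mk.injEq] at hend ⊢
    omega

lemma pathPts_widened_inter (hm : 0 < m) (hn : 0 < n) (P : Polyomino m n) :
    pathPts (insertEast (colHeight P.upper 0) P.upper) ∩
      pathPts (insertEast (colHeight P.upper 0 - 1) P.lower) = {(0, 0), (m + 1, n)} := by
  have hupper : pathPos (insertEast (colHeight P.upper 0) P.upper) = (m + 1, n) := by
    rw [pathPos_insertEast (colHeight_le_countN (by rwa [P.upperE])), P.upperE, P.upperN]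
  have hlower : pathPos (insertEast (colHeight P.upper 0 - 1) P.lower) = (m + 1, n) := by
    rw [pathPos_insertEast (P.colHeight_upper_zero_pred_lt_countN_lower hm hn).le, P.lowerE,
      P.lowerN]
  ext p
  simp only [Finset.mem_inter, Finset.mem_insert, Finset.mem_singleton]
  constructor
  · rintro ⟨hpU, hpL⟩
    exact P.eq_endpoint_of_mem_widened hm hn hpU hpL
  · rintro (rfl | rfl)
    · exact ⟨zero_mem_pathPts _, zero_mem_pathPts _⟩
    · exact ⟨hupper ▸ pathPos_mem_pathPts _, hlower ▸ pathPos_mem_pathPts _⟩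

/-- The polyomino with one more column obtained from `P` by inserting an east step into the upper
path at the height `h` of its first east step, and one into the lower path at height `h - 1`. -/
def widen (hm : 0 < m) (hn : 0 < n) (P : Polyomino m n) : Polyomino (m + 1) n where
  lower := insertEast (colHeight P.upper 0 - 1) P.lower
  upper := insertEast (colHeight P.upper 0) P.upper
  lowerE := by
    rw [countE_insertEast (P.colHeight_upper_zero_pred_lt_countN_lower hm hn).le, P.lowerE]
  lowerN := by rw [countN_insertEast, P.lowerN]
  upperE := by rw [countE_insertEast (colHeight_le_countN (by rwa [P.upperE])), P.upperE]
  upperN := by rw [countN_insertEast, P.upperN]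
  above _ hi := P.colHeight_le_of_widened hm hn hi
  meet := P.pathPts_widened_inter hm hn

variable (hm : 0 < m) (hn : 0 < n)

lemma widen_injective : Function.Injective (widen hm hn) := by
  intro P Q hPQ
  have hheight (R : Polyomino m n) : colHeight (R.widen hm hn).upper 0 = colHeight R.upper 0 :=
    colHeight_insertEast_colHeight_zero_zero (by rwa [R.upperE])
  have hfirst : colHeight P.upper 0 = colHeight Q.upper 0 := by rw [← hheight, hPQ, hheight]
  have hupper : P.upper = Q.upper := by
    apply insertEast_injective (colHeight P.upper 0)
    conv_rhs => rw [hfirst]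
    exact congrArg upper hPQ
  have hlower : P.lower = Q.lower := by
    apply insertEast_injective (colHeight P.upper 0 - 1)
    conv_rhs => rw [hfirst]
    exact congrArg lower hPQ
  cases P
  cases Q
  simp_all only

lemma area_widen (P : Polyomino m n) : area (P.widen hm hn) = area P := by
  have hlt := P.colHeight_lower_zero_lt hm hn
  have hcount : colHeight P.upper 0 ≤ countN P.upper := colHeight_le_countN (by rwa [P.upperE])
  have hupper : ∑ i ∈ Finset.range (m + 1), colHeight (P.widen hm hn).upper i =
      ∑ i ∈ Finset.range m, colHeight P.upper i + colHeight P.upper 0 := by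
    simpa only [P.upperE, widen] using sum_colHeight_insertEast hcount
  have hlower : ∑ i ∈ Finset.range (m + 1), colHeight (P.widen hm hn).lower i =
      ∑ i ∈ Finset.range m, colHeight P.lower i + (colHeight P.upper 0 - 1) := by
    simpa only [P.lowerE, widen] using
      sum_colHeight_insertEast (P.colHeight_upper_zero_pred_lt_countN_lower hm hn).le
  unfold area
  rw [Finset.sum_tsub_distrib _ fun i hi ↦ P.above i (Finset.mem_range.1 hi),
    Finset.sum_tsub_distrib _ fun i hi ↦ (P.widen hm hn).above i (Finset.mem_range.1 hi),
    hupper, hlower]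
  omega

lemma bounce_widen (P : Polyomino m n) : bounce (P.widen hm hn) = bounce P := by
  have hlt := P.colHeight_lower_zero_lt hm hn
  have hupper : 0 < countE P.upper := by rwa [P.upperE]
  have hshift : ∀ y, colHeight P.upper 0 ≤ y → ∀ i,
      y ≤ colHeight (P.widen hm hn).lower (i + 1) ↔ y ≤ colHeight P.lower i := fun y hy i ↦
    le_colHeight_insertEast_succ_iff (P.colHeight_upper_zero_pred_lt_countN_lower hm hn).le
      (by omega)
  have hone : colHeight (P.widen hm hn).lower 1 < colHeight P.upper 0 := by
    rw [← not_le] at hlt ⊢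
    exact mt (hshift _ le_rfl 0).1 hlt
  have htotal : bounceAux (colHeight (P.widen hm hn).upper) (colHeight (P.widen hm hn).lower)
      (m + 1) n (m + 1 + n + 2) 1 0 0 =
      bounceAux (colHeight P.upper) (colHeight P.lower) m n (m + n + 2) 1 0 0 + 1 :=
    bounceAux_widen hm hn (colHeight_insertEast_colHeight_zero_zero hupper)
      (colHeight_insertEast_colHeight_zero_succ hupper)
      (fun i hi ↦ hshift _ (P.colHeight_upper_zero_le_of_lt hi)) hone
  rw [bounce, bounce, htotal]
  omega

end Polyomino

/-- For every fixed `k ≥ 1`, each coefficient of `N_{m,k}(q,t)` is nondecreasing in `m`: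
for all `m ≥ k + 1` and `u v`, the number of `P ∈ PP(m-k, k)` with `area P = u` and
`bounce P = v` is at most the number of `P ∈ PP(m-k+1, k)` with `area P = u` and
`bounce P = v` (so the incremental polynomial `N_{m,k} - N_{m-1,k}` has nonnegative
coefficients). -/
theorem incremental_narayana_nonneg (k : ℕ) (hk : 1 ≤ k) (m : ℕ) (hm : k + 1 ≤ m)
    (u v : ℕ) :
    Nat.card {P : Polyomino (m - k) k // area P = u ∧ bounce P = v} ≤
    Nat.card {P : Polyomino (m - k + 1) k // area P = u ∧ bounce P = v} := by
  have hM : 0 < m - k := Nat.sub_pos_of_lt hm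
  let widenFiber (P : {P : Polyomino (m - k) k // area P = u ∧ bounce P = v}) :
      {P : Polyomino (m - k + 1) k // area P = u ∧ bounce P = v} :=
    ⟨P.1.widen hM hk, by rw [Polyomino.area_widen, Polyomino.bounce_widen]; exact P.2⟩
  exact Nat.card_le_card_of_injective widenFiber fun P Q hPQ ↦
    Subtype.ext (Polyomino.widen_injective hM hk (congrArg Subtype.val hPQ))

end QtN
end
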